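/- arXiv:1911.01061 — 10 statements merged into one kernel-verified Lean document; each statement's English description precedes it below -/
import Mathlib

section
/- Let d ∈ ℝ^n have all entries strictly positive and let x, y ∈ ℝ^n. Then x ≺_d y if and only if for every continuous convex function ψ : ℝ → ℝ one has Σ_{j=1}^n d_j·ψ(x_j/d_j) ≤ Σ_{j=1}^n d_j·ψ(y_j/d_j). -/
/-- A matrix is `d`-stochastic if it has nonnegative entries, each column sums to one,
and it fixes the vector `d`. -/
def IsDStochastic {n : ℕ} (d : Fin n → ℝ) (A : Matrix (Fin n) (Fin n) ℝ) : Prop :=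
  (∀ i j, 0 ≤ A i j) ∧ (∀ j, ∑ i, A i j = 1) ∧ A.mulVec d = d

/-- `x` is `d`-majorized by `y` if some `d`-stochastic matrix maps `y` to `x`. -/
def DMaj {n : ℕ} (d x y : Fin n → ℝ) : Prop :=
  ∃ A : Matrix (Fin n) (Fin n) ℝ, IsDStochastic d A ∧ x = A.mulVec y

/-!
Sherman's theorem for weighted point families in a locally convex space contains the claim, via the
points `x j / d j` and `y j / d j` with weights `d j`.

If a column-stochastic matrix `A` transports one family to the other, each target point is a
barycentre of source points, so Jensen's inequality applies row by row. Conversely, the images of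
`(q j, q j • v j)` under column-stochastic matrices form a compact convex set. By Hahn–Banach, the
target lies in it unless some linear functionals `f i` on `ℝ × E` separate the two, and separation
is refuted by testing the hypothesis on the single convex function `ψ e = max i, f i (1, e)`: by
homogeneity, `q j * ψ (v j)` is the value at `(q j, q j • v j)` of the maximal functional, and
choosing that functional for each `j` is a column-stochastic `0`-`1` matrix.
-/

theorem convexOn_finset_sup' {𝕜 E β ι : Type*} [Semiring 𝕜] [PartialOrder 𝕜] [AddCommMonoid E]
    [SMul 𝕜 E] [AddCommMonoid β] [LinearOrder β] [IsOrderedAddMonoid β] [Module 𝕜 β]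
    [PosSMulStrictMono 𝕜 β] {s : Finset ι} (hs : s.Nonempty) {C : Set E} {f : ι → E → β}
    (hf : ∀ i ∈ s, ConvexOn 𝕜 C (f i)) : ConvexOn 𝕜 C (s.sup' hs f) :=
  Finset.sup'_induction hs f (fun _ h₁ _ h₂ => h₁.sup h₂) hf

variable {ι κ E : Type*} [Fintype ι] [Fintype κ] [AddCommGroup E] [Module ℝ E]

theorem sum_mul_map_le_of_sum_smul_eq {C : Set E} {ψ : E → ℝ} (hψ : ConvexOn ℝ C ψ) {w : κ → ℝ}
    (hw : ∀ j, 0 ≤ w j) {v : κ → E} (hv : ∀ j, v j ∈ C) {e : E}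
    (he : ∑ j, w j • v j = (∑ j, w j) • e) :
    (∑ j, w j) * ψ e ≤ ∑ j, w j * ψ (v j) := by
  rcases (Finset.sum_nonneg fun j _ => hw j).eq_or_lt with hzero | hpos
  · have hw_zero : ∀ j, w j = 0 := fun j =>
      (Finset.sum_eq_zero_iff_of_nonneg fun j _ => hw j).1 hzero.symm j (Finset.mem_univ j)
    simp [hw_zero]
  · have jensen := hψ.map_centerMass_le (fun j _ => hw j) hpos fun j _ => hv j
    rw [Finset.centerMass, he, inv_smul_smul₀ hpos.ne'] at jensen
    exact (le_inv_mul_iff₀ hpos).1 jensen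

/-- The linear map sending a matrix, given by its columns, to the family of combinations of the
vectors `z j` with the rows of the matrix as coefficients. -/
def rowCombination (ι : Type*) (z : κ → E) : (κ → ι → ℝ) →ₗ[ℝ] (ι → E) :=
  LinearMap.pi fun i => Fintype.linearCombination ℝ z ∘ₗ (LinearMap.proj i).compLeft κ

theorem rowCombination_apply {ι : Type*} (z : κ → E) (T : κ → ι → ℝ) (i : ι) :
    rowCombination ι z T i = ∑ j, T j i • z j := rfl

theorem sum_apply_rowCombination_single [DecidableEq ι] (z : κ → E) (k : κ → ι)
    (f : ι → E →ₗ[ℝ] ℝ) :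
    ∑ i, f i (rowCombination ι z (fun j => Pi.single (k j) 1) i) = ∑ j, f (k j) (z j) := by
  simp only [rowCombination_apply, map_sum, map_smul]
  rw [Finset.sum_comm]
  simp [Pi.single_apply]

section Separation

variable [TopologicalSpace E] [IsTopologicalAddGroup E] [ContinuousSMul ℝ E]
  [LocallyConvexSpace ℝ E] [T2Space E]

theorem exists_rowCombination_eq {z : κ → E} {w : ι → E}
    (h : ∀ f : ι → StrongDual ℝ E, ∃ k : κ → ι, ∑ i, f i (w i) ≤ ∑ j, f (k j) (z j)) :
    ∃ T : κ → ι → ℝ, (∀ j, T j ∈ stdSimplex ℝ ι) ∧ rowCombination ι z T = w := by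
  classical
  let K : Set (κ → ι → ℝ) := Set.univ.pi fun _ => stdSimplex ℝ ι
  suffices hw : w ∈ rowCombination ι z '' K by
    obtain ⟨T, hT, rfl⟩ := hw
    exact ⟨T, fun j => hT j (Set.mem_univ j), rfl⟩
  have hK_convex : Convex ℝ K := convex_pi fun _ _ => convex_stdSimplex ℝ ι
  have hK_compact : IsCompact K := isCompact_univ_pi fun _ => isCompact_stdSimplex ℝ ι
  by_contra hw
  obtain ⟨F, c, hFc, hcF⟩ := geometric_hahn_banach_closed_point (hK_convex.linear_image _)
    (hK_compact.image (LinearMap.continuous_of_finiteDimensional _)).isClosed hw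
  let f (i : ι) : StrongDual ℝ E := F ∘SL ContinuousLinearMap.single ℝ (fun _ => E) i
  have hF (g : ι → E) : F g = ∑ i, f i (g i) :=
    (F.sum_comp_single ℝ (fun _ => E) g).symm
  obtain ⟨k, hk⟩ := h f
  have hvertex := hFc _ (Set.mem_image_of_mem _
    (fun j _ => single_mem_stdSimplex ℝ (k j) : (fun j => Pi.single (k j) 1) ∈ K))
  have hvertex_value := sum_apply_rowCombination_single z k fun i => (f i).toLinearMap
  simp only [ContinuousLinearMap.coe_coe] at hvertex_value
  rw [hF, hvertex_value] at hvertex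
  rw [hF] at hcF
  linarith

end Separation

section MaxAffine

variable [TopologicalSpace E]

/-- The maximum of finitely many continuous affine functions on `E`, each encoded as a continuous
linear functional on `ℝ × E` restricted to the slice `{1} × E`. -/
noncomputable def maxAffine [Nonempty ι] (f : ι → StrongDual ℝ (ℝ × E)) : E → ℝ :=
  Finset.univ.sup' Finset.univ_nonempty fun i e => f i (1, e)

variable [Nonempty ι] (f : ι → StrongDual ℝ (ℝ × E))

theorem continuous_maxAffine : Continuous (maxAffine f) :=
  Continuous.finset_sup' _ fun _ _ => by fun_prop

theorem convexOn_maxAffine : ConvexOn ℝ Set.univ (maxAffine f) :=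
  convexOn_finset_sup' _ fun i _ => ((f i).toLinearMap.convexOn convex_univ).comp_affineMap
    ((AffineMap.const ℝ E (1 : ℝ)).prod (AffineMap.id ℝ E))

theorem apply_le_maxAffine (i : ι) (e : E) : f i (1, e) ≤ maxAffine f e := by
  rw [maxAffine, Finset.sup'_apply]
  exact Finset.le_sup' (fun i => f i (1, e)) (Finset.mem_univ i)

theorem exists_maxAffine_eq_apply (e : E) : ∃ i, maxAffine f e = f i (1, e) := by
  obtain ⟨i, -, hi⟩ := Finset.exists_mem_eq_sup' Finset.univ_nonempty fun i => f i (1, e)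
  exact ⟨i, by rw [maxAffine, Finset.sup'_apply, hi]⟩

end MaxAffine

/-- Majorization of finitely supported measures on `E`: the family of points `u` with weights `p`
arises from the family `v` with weights `q` by moving the fraction `A i j` of the mass `q j` from
`j` to `i` and placing the mass collected at `i` in its barycentre `u i`. The last condition is
multiplied by `p i`, so it leaves `u i` free where `p i = 0`. -/
def WeightedMaj (p : ι → ℝ) (u : ι → E) (q : κ → ℝ) (v : κ → E) : Prop :=
  ∃ A : Matrix ι κ ℝ, (∀ i j, 0 ≤ A i j) ∧ (∀ j, ∑ i, A i j = 1) ∧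
    (∀ i, ∑ j, A i j * q j = p i) ∧ ∀ i, ∑ j, (A i j * q j) • v j = p i • u i

theorem dMaj_iff_weightedMaj {n : ℕ} {d x y : Fin n → ℝ} (hd : ∀ i, d i ≠ 0) :
    DMaj d x y ↔ WeightedMaj d (fun i => x i / d i) d (fun j => y j / d j) := by
  have cancel (a : ℝ) (j : Fin n) (t : ℝ) : a * d j * (t / d j) = a * t := by
    rw [mul_assoc, mul_div_cancel₀ _ (hd j)]
  simp only [DMaj, IsDStochastic, WeightedMaj, funext_iff, Matrix.mulVec, dotProduct, smul_eq_mul,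
    cancel, mul_div_cancel₀ _ (hd _), and_assoc, eq_comm (a := x _)]

theorem WeightedMaj.sum_mul_map_le {p : ι → ℝ} {u : ι → E} {q : κ → ℝ} {v : κ → E}
    (h : WeightedMaj p u q v) (hq : ∀ j, 0 ≤ q j) {ψ : E → ℝ} (hψ : ConvexOn ℝ Set.univ ψ) :
    ∑ i, p i * ψ (u i) ≤ ∑ j, q j * ψ (v j) := by
  obtain ⟨A, hA, hA_col, hp, hu⟩ := h
  calc ∑ i, p i * ψ (u i)
      ≤ ∑ i, ∑ j, A i j * q j * ψ (v j) := by
        refine Finset.sum_le_sum fun i _ => ?_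
        rw [← hp i]
        exact sum_mul_map_le_of_sum_smul_eq hψ (fun j => mul_nonneg (hA i j) (hq j))
          (fun j => Set.mem_univ (v j)) (by rw [hp i, hu i])
    _ = ∑ j, (∑ i, A i j) * (q j * ψ (v j)) := by
        rw [Finset.sum_comm]
        simp only [Finset.sum_mul, mul_assoc]
    _ = ∑ j, q j * ψ (v j) := by simp only [hA_col, one_mul]

variable [TopologicalSpace E] [IsTopologicalAddGroup E] [ContinuousSMul ℝ E]
  [LocallyConvexSpace ℝ E] [T2Space E]

theorem weightedMaj_of_forall_maxAffine [Nonempty ι] {p : ι → ℝ} {q : κ → ℝ} (hp : ∀ i, 0 ≤ p i)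
    {u : ι → E} {v : κ → E} (h : ∀ f : ι → StrongDual ℝ (ℝ × E),
      ∑ i, p i * maxAffine f (u i) ≤ ∑ j, q j * maxAffine f (v j)) :
    WeightedMaj p u q v := by
  have homogeneous (g : StrongDual ℝ (ℝ × E)) (t : ℝ) (e : E) : g (t, t • e) = t * g (1, e) := by
    rw [← smul_eq_mul, ← map_smul, Prod.smul_mk, smul_eq_mul, mul_one]
  obtain ⟨T, hT, hTw⟩ := exists_rowCombination_eq
    (z := fun j => (q j, q j • v j)) (w := fun i => (p i, p i • u i)) fun f => by
      choose k hk using fun j => exists_maxAffine_eq_apply f (v j)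
      refine ⟨k, ?_⟩
      simp only [homogeneous, ← hk]
      exact (Finset.sum_le_sum fun i _ =>
        mul_le_mul_of_nonneg_left (apply_le_maxAffine f i (u i)) (hp i)).trans (h f)
  have hTw_apply (i : ι) : ∑ j, T j i • (q j, q j • v j) = (p i, p i • u i) := congrFun hTw i
  simp only [Prod.ext_iff, Prod.fst_sum, Prod.snd_sum, Prod.smul_mk, smul_eq_mul, smul_smul]
    at hTw_apply
  exact ⟨fun i j => T j i, fun i j => (hT j).1 i, fun j => (hT j).2, fun i => (hTw_apply i).1,
    fun i => (hTw_apply i).2⟩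

theorem stmt0_general {p : ι → ℝ} {q : κ → ℝ} (hp : ∀ i, 0 ≤ p i) (hq : ∀ j, 0 < q j)
    (u : ι → E) (v : κ → E) :
    WeightedMaj p u q v ↔
      ∀ ψ : E → ℝ, Continuous ψ → ConvexOn ℝ Set.univ ψ →
        ∑ i, p i * ψ (u i) ≤ ∑ j, q j * ψ (v j) := by
  refine ⟨fun h ψ _ hψ => h.sum_mul_map_le (fun j => (hq j).le) hψ, fun h => ?_⟩
  rcases isEmpty_or_nonempty ι with hι | hι
  · -- Testing on `-1` shows that the total mass of `q` is at most that of `p`, which is zero.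
    have hmass : ∑ j, q j ≤ 0 := by
      simpa using h (fun _ => -1) continuous_const (convexOn_const _ convex_univ)
    have hκ : IsEmpty κ := by
      by_contra! hκ
      exact hmass.not_gt (Finset.sum_pos (fun j _ => hq j) Finset.univ_nonempty)
    exact ⟨0, isEmptyElim, isEmptyElim, isEmptyElim, isEmptyElim⟩
  · exact weightedMaj_of_forall_maxAffine hp fun f =>
      h _ (continuous_maxAffine f) (convexOn_maxAffine f)

theorem stmt0 {n : ℕ} (d x y : Fin n → ℝ) (hd : ∀ i, 0 < d i) :
    DMaj d x y ↔
      ∀ ψ : ℝ → ℝ, Continuous ψ → ConvexOn ℝ Set.univ ψ →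
        ∑ j, d j * ψ (x j / d j) ≤ ∑ j, d j * ψ (y j / d j) :=
  (dMaj_iff_weightedMaj fun i => (hd i).ne').trans (stmt0_general (fun i => (hd i).le) hd _ _)
end

section
/- Let d ∈ ℝ^n have all entries strictly positive and let x, y ∈ ℝ^n. Then x ≺_d y if and only if ‖x − t·d‖₁ ≤ ‖y − t·d‖₁ for all t ∈ ℝ. -/
/-!
A column-stochastic matrix contracts `ℓ¹`, and `x - t • d = A *ᵥ (y - t • d)`; this is the forward
direction. For the converse, the `ℓ¹` inequalities say that every function `|· - t|` has a larger
weighted mean over the points `y j / d j` than over the points `x i / d i`, both with weights `d`.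
Letting `t → ±∞`, affine functions have equal means. On a finite set a convex function agrees with
an affine function plus a nonnegative combination of functions `(· - t)⁺`, so the inequality holds
for every convex function. If the pair `(d, x)` were not the image of `(d, y)` under a
column-stochastic matrix, a separating family of functionals `ℓ i` on `ℝ²` would contradict this
for the convex function `r ↦ max i, ℓ i (1, r)`.
-/

section ConvexFunctions

variable {𝕜 : Type*} [Field 𝕜] [LinearOrder 𝕜] [IsStrictOrderedRing 𝕜]

lemma mul_abs_div_sub {a : 𝕜} (ha : 0 < a) (b t : 𝕜) : a * |b / a - t| = |b - t * a| := by
  rw [← abs_of_pos ha, ← abs_mul, abs_of_pos ha, mul_sub, mul_div_cancel₀ b ha.ne', mul_comm a t]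

lemma affine_le_of_convexOn {s : Set 𝕜} {f : 𝕜 → 𝕜} (hf : ConvexOn 𝕜 s f) {α β p q r : 𝕜}
    (hp : p ∈ s) (hr : r ∈ s) (hpq : p < q) (hqr : q ≤ r) (hαp : α + β * p = f p)
    (hαq : α + β * q = f q) : α + β * r ≤ f r := by
  rcases hqr.eq_or_lt with rfl | hqr
  · exact hαq.le
  have hsecant : (r - p) * f q ≤ (r - q) * f p + (q - p) * f r :=
    hf.secant_mono_aux1 hp hr hpq hqr
  rw [← hαp, ← hαq] at hsecant
  refine le_of_mul_le_mul_left ?_ (sub_pos.2 hpq)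
  linear_combination hsecant

/-- Convex piecewise affine functions of one variable with finitely many breakpoints, generated
from the affine functions by adding hinges `δ * (r - t)⁺` with `0 ≤ δ`. This presentation, rather
than one as a maximum of affine functions, lets inequalities between means be checked on
generators. -/
inductive ConvexPiecewiseAffine : (𝕜 → 𝕜) → Prop
  | affine (α β : 𝕜) : ConvexPiecewiseAffine fun r ↦ α + β * r
  | add_hinge {g : 𝕜 → 𝕜} (hg : ConvexPiecewiseAffine g) {δ : 𝕜} (hδ : 0 ≤ δ) (t : 𝕜) :
      ConvexPiecewiseAffine fun r ↦ g r + δ * (r - t)⁺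

namespace ConvexPiecewiseAffine

lemma exists_eqOn_Iic_and_eq {f g : 𝕜 → 𝕜} (hf : ConvexOn 𝕜 Set.univ f)
    (hg : ConvexPiecewiseAffine g) {α β p a : 𝕜} (hpa : p < a) (hgp : g p = f p) (hga : g a ≤ f a)
    (hline : ∀ r, p ≤ r → g r = α + β * r) :
    ∃ g', ConvexPiecewiseAffine g' ∧ Set.EqOn g' g (Set.Iic p) ∧ g' a = f a ∧
      ∃ α' β', ∀ r, a ≤ r → g' r = α' + β' * r ∧ g' r ≤ f r := by
  have hap : 0 < a - p := sub_pos.2 hpa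
  obtain ⟨δ, hδ⟩ : ∃ δ, δ * (a - p) = f a - g a := ⟨_, div_mul_cancel₀ _ hap.ne'⟩
  have hδ_nonneg : 0 ≤ δ := nonneg_of_mul_nonneg_left (hδ ▸ sub_nonneg.2 hga) hap
  have hline' : ∀ r, p ≤ r → g r + δ * (r - p)⁺ = α - δ * p + (β + δ) * r := fun r hr ↦ by
    rw [hline r hr, posPart_of_nonneg (sub_nonneg.2 hr)]
    ring
  refine ⟨_, hg.add_hinge hδ_nonneg p, fun r hr ↦ ?_, ?_, α - δ * p, β + δ,
    fun r hr ↦ ⟨hline' r (hpa.le.trans hr), ?_⟩⟩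
  · simp [posPart_of_nonpos (sub_nonpos.2 (Set.mem_Iic.1 hr))]
  · simp [posPart_of_nonneg hap.le, hδ]
  · rw [hline' r (hpa.le.trans hr)]
    refine affine_le_of_convexOn hf (Set.mem_univ p) (Set.mem_univ r) hpa hr ?_ ?_
    · simp [← hline' p le_rfl, hgp]
    · simp [← hline' a hpa.le, posPart_of_nonneg hap.le, hδ]

-- The last conjunct serves the induction: it gives the next hinge a nonnegative weight.
lemma exists_eqOn_finset_and_le {f : 𝕜 → 𝕜} (hf : ConvexOn 𝕜 Set.univ f) (T : Finset 𝕜) :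
    ∃ g, ConvexPiecewiseAffine g ∧ Set.EqOn g f T ∧
      ∃ α β, ∀ p, IsGreatest (T : Set 𝕜) p → ∀ r, p ≤ r → g r = α + β * r ∧ g r ≤ f r := by
  induction T using Finset.induction_on_max with
  | empty => exact ⟨_, affine 0 0, by simp, 0, 0, by simp [IsGreatest]⟩
  | insert a T ha ih =>
    have hgreatest : ∀ p, IsGreatest (insert a T : Finset 𝕜) p → p = a := fun p hp ↦
      hp.unique ⟨by simp, by simpa [upperBounds] using fun t ht ↦ (ha t ht).le⟩
    rcases T.eq_empty_or_nonempty with rfl | hT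
    · obtain ⟨α, β, hα, hβ⟩ : ∃ α β, α + β * (a - 1) = f (a - 1) ∧ α + β * a = f a :=
        ⟨f a - (f a - f (a - 1)) * a, f a - f (a - 1), by ring, by ring⟩
      refine ⟨_, affine α β, by simpa using hβ, α, β, fun p hp r hr ↦ ⟨rfl, ?_⟩⟩
      obtain rfl := hgreatest p hp
      exact affine_le_of_convexOn hf (Set.mem_univ _) (Set.mem_univ r) (sub_one_lt p) hr hα hβ
    · obtain ⟨g, hg, hgT, α, β, hline⟩ := ih
      have hp := T.isGreatest_max' hT
      set p := T.max' hT
      have hpa : p < a := ha p hp.1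
      obtain ⟨g', hg', hg'p, hg'a, α', β', hline'⟩ := hg.exists_eqOn_Iic_and_eq hf hpa (hgT hp.1)
        (hline p hp a hpa.le).2 fun r hr ↦ (hline p hp r hr).1
      refine ⟨g', hg', ?_, α', β', fun q hq ↦ hgreatest q hq ▸ hline'⟩
      rw [Finset.coe_insert]
      rintro t (rfl | ht)
      exacts [hg'a, (hg'p (hp.2 ht)).trans (hgT ht)]

end ConvexPiecewiseAffine

variable {ι κ : Type*} [Fintype ι] [Fintype κ] {c p : ι → 𝕜} {d q : κ → 𝕜}

lemma sum_mul_le_sum_mul_of_sum_mul_abs_sub_le (hsum : ∑ i, c i = ∑ j, d j)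
    (habs : ∀ t, ∑ i, c i * |p i - t| ≤ ∑ j, d j * |q j - t|) :
    ∑ j, d j * q j ≤ ∑ i, c i * p i := by
  obtain ⟨t, ht⟩ := ((Set.finite_range p).union (Set.finite_range q)).bddAbove
  have hp : ∀ i, |p i - t| = t - p i := fun i ↦ by
    rw [abs_sub_comm, abs_of_nonneg (sub_nonneg.2 (ht (.inl ⟨i, rfl⟩)))]
  have hq : ∀ j, |q j - t| = t - q j := fun j ↦ by
    rw [abs_sub_comm, abs_of_nonneg (sub_nonneg.2 (ht (.inr ⟨j, rfl⟩)))]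
  have habs_t := habs t
  simp only [hp, hq, mul_sub, Finset.sum_sub_distrib, ← Finset.sum_mul, hsum] at habs_t
  linarith

lemma sum_mul_eq_sum_mul_of_sum_mul_abs_sub_le (hsum : ∑ i, c i = ∑ j, d j)
    (habs : ∀ t, ∑ i, c i * |p i - t| ≤ ∑ j, d j * |q j - t|) :
    ∑ i, c i * p i = ∑ j, d j * q j := by
  refine le_antisymm ?_ (sum_mul_le_sum_mul_of_sum_mul_abs_sub_le hsum habs)
  have habs_neg : ∀ t, ∑ i, c i * |-p i - t| ≤ ∑ j, d j * |-q j - t| := fun t ↦ by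
    simpa only [← abs_neg (-_ - t), neg_sub, sub_neg_eq_add, add_comm t] using habs (-t)
  simpa using sum_mul_le_sum_mul_of_sum_mul_abs_sub_le hsum habs_neg

lemma ConvexPiecewiseAffine.sum_mul_le_sum_mul {g : 𝕜 → 𝕜} (hg : ConvexPiecewiseAffine g)
    (hsum : ∑ i, c i = ∑ j, d j)
    (habs : ∀ t, ∑ i, c i * |p i - t| ≤ ∑ j, d j * |q j - t|) :
    ∑ i, c i * g (p i) ≤ ∑ j, d j * g (q j) := by
  have hmean := sum_mul_eq_sum_mul_of_sum_mul_abs_sub_le hsum habs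
  induction hg with
  | affine α β =>
    simp only [mul_add, mul_left_comm _ β, Finset.sum_add_distrib, ← Finset.sum_mul,
      ← Finset.mul_sum, hsum, hmean, le_refl]
  | @add_hinge g _ δ hδ t ih =>
    have hpos : ∀ r : 𝕜, (r - t)⁺ = (r - t + |r - t|) / 2 := fun r ↦ by
      linarith [posPart_add_negPart (r - t), posPart_sub_negPart (r - t)]
    have hhinge : ∑ i, c i * (p i - t)⁺ ≤ ∑ j, d j * (q j - t)⁺ := by
      simp only [hpos, mul_div_assoc', ← Finset.sum_div, mul_add, mul_sub, Finset.sum_add_distrib,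
        Finset.sum_sub_distrib, ← Finset.sum_mul, hsum, hmean]
      linarith [habs t]
    simp only [mul_add, mul_left_comm _ δ, Finset.sum_add_distrib, ← Finset.mul_sum]
    gcongr

theorem sum_mul_le_sum_mul_of_convexOn {f : 𝕜 → 𝕜} (hf : ConvexOn 𝕜 Set.univ f)
    (hsum : ∑ i, c i = ∑ j, d j)
    (habs : ∀ t, ∑ i, c i * |p i - t| ≤ ∑ j, d j * |q j - t|) :
    ∑ i, c i * f (p i) ≤ ∑ j, d j * f (q j) := by
  obtain ⟨g, hg, hgf, -⟩ := ConvexPiecewiseAffine.exists_eqOn_finset_and_le hf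
    (Finset.univ.image p ∪ Finset.univ.image q)
  have hp : ∀ i, g (p i) = f (p i) := fun i ↦ hgf (by simp)
  have hq : ∀ j, g (q j) = f (q j) := fun j ↦ hgf (by simp)
  simpa only [hp, hq] using hg.sum_mul_le_sum_mul hsum habs

end ConvexFunctions

lemma convexOn_ciSup {ι : Sort*} {E : Type*} [Nonempty ι] [AddCommMonoid E] [Module ℝ E] {s : Set E}
    {f : ι → E → ℝ} (hf : ∀ i, ConvexOn ℝ s (f i))
    (hbdd : ∀ x ∈ s, BddAbove (Set.range fun i ↦ f i x)) :
    ConvexOn ℝ s fun x ↦ ⨆ i, f i x := by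
  refine ⟨(hf (Classical.arbitrary ι)).1, fun x hx y hy a b ha hb hab ↦ ciSup_le fun i ↦ ?_⟩
  calc f i (a • x + b • y) ≤ a • f i x + b • f i y := (hf i).2 hx hy ha hb hab
    _ ≤ a • (⨆ i, f i x) + b • ⨆ i, f i y := by
      gcongr
      exacts [le_ciSup (hbdd x hx) i, le_ciSup (hbdd y hy) i]

section ColumnStochastic

variable {ι κ : Type*} [Fintype ι] [Fintype κ]

lemma sum_abs_mulVec_le {R : Type*} [Ring R] [LinearOrder R] [IsOrderedRing R]
    {A : Matrix ι κ R} (hA : ∀ j, ∑ i, |A i j| ≤ 1) (v : κ → R) :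
    ∑ i, |A.mulVec v i| ≤ ∑ j, |v j| :=
  calc ∑ i, |A.mulVec v i| ≤ ∑ i, ∑ j, |A i j| * |v j| := by
        gcongr with i
        simpa only [Matrix.mulVec, dotProduct, abs_mul] using
          Finset.abs_sum_le_sum_abs (fun j ↦ A i j * v j) Finset.univ
    _ = ∑ j, (∑ i, |A i j|) * |v j| := by
        rw [Finset.sum_comm]
        simp only [Finset.sum_mul]
    _ ≤ ∑ j, |v j| := by
        gcongr with j
        exact mul_le_of_le_one_left (abs_nonneg _) (hA j)

-- The functions `σ` are the extreme points of the set of column-stochastic matrices.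
theorem exists_colStochastic_sum_smul_eq {E : Type*} [AddCommGroup E] [Module ℝ E]
    [TopologicalSpace E] [IsTopologicalAddGroup E] [ContinuousSMul ℝ E] [LocallyConvexSpace ℝ E]
    [T2Space E] {u : ι → E} {v : κ → E}
    (h : ∀ l : ι → StrongDual ℝ E, ∃ σ : κ → ι, ∑ i, l i (u i) ≤ ∑ j, l (σ j) (v j)) :
    ∃ A : Matrix ι κ ℝ, (∀ j, A.col j ∈ stdSimplex ℝ ι) ∧ ∀ i, ∑ j, A i j • v j = u i := by
  classical
  let K : Set (Matrix κ ι ℝ) := Set.univ.pi fun _ ↦ stdSimplex ℝ ι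
  have hK_compact : IsCompact K := isCompact_univ_pi fun _ ↦ isCompact_stdSimplex ℝ ι
  have hK_convex : Convex ℝ K := convex_pi fun _ _ ↦ convex_stdSimplex ℝ ι
  let F : Matrix κ ι ℝ →ₗ[ℝ] ι → E :=
    (Fintype.linearCombination ℝ v).compLeft ι ∘ₗ (Matrix.transposeLinearEquiv κ ι ℝ ℝ).toLinearMap
  have hF : ∀ B i, F B i = ∑ j, B j i • v j := fun _ _ ↦ rfl
  suffices hu : u ∈ F '' K by
    obtain ⟨B, hB, rfl⟩ := hu
    exact ⟨B.transpose, fun j ↦ hB j trivial, fun i ↦ (hF B i).symm⟩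
  by_contra hu
  obtain ⟨l, m, hlm, hml⟩ := geometric_hahn_banach_closed_point (hK_convex.linear_image F)
    (hK_compact.image F.continuous_of_finiteDimensional).isClosed hu
  have hl : ∀ w, l w = ∑ i, l (Pi.single i (w i)) := fun w ↦ by
    rw [← map_sum, Finset.univ_sum_single]
  obtain ⟨σ, hσ⟩ := h fun i ↦ l.comp (ContinuousLinearMap.single ℝ (fun _ ↦ E) i)
  let B : Matrix κ ι ℝ := .of fun j ↦ Pi.single (σ j) 1
  have hB : B ∈ K := fun j _ ↦ single_mem_stdSimplex ℝ (σ j)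
  have hFB : F B = ∑ j, Pi.single (σ j) (v j) := by
    ext i
    simp [hF, B, Pi.single_apply]
  have hlB : l u ≤ l (F B) := by
    rw [hl u, hFB, map_sum]
    exact hσ
  exact (hml.trans_le hlB).not_gt (hlm _ ⟨B, hB, rfl⟩)

lemma exists_sum_dual_le_of_sum_abs_sub_le {c x : ι → ℝ} {d y : κ → ℝ} (hc : ∀ i, 0 < c i)
    (hd : ∀ j, 0 < d j) (hsum : ∑ i, c i = ∑ j, d j)
    (h : ∀ t : ℝ, ∑ i, |x i - t * c i| ≤ ∑ j, |y j - t * d j|) (l : ι → StrongDual ℝ (ℝ × ℝ)) :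
    ∃ σ : κ → ι, ∑ i, l i (c i, x i) ≤ ∑ j, l (σ j) (d j, y j) := by
  rcases isEmpty_or_nonempty ι with hι | hι
  · have hκ : IsEmpty κ := not_nonempty_iff.1 fun _ ↦
      (Finset.sum_pos (fun j _ ↦ hd j) Finset.univ_nonempty).ne (by simpa using hsum)
    exact ⟨isEmptyElim, by simp⟩
  let f : ℝ → ℝ := fun r ↦ ⨆ i, l i (1, r)
  have hbdd : ∀ r, BddAbove (Set.range fun i ↦ l i (1, r)) := fun _ ↦ Set.finite_range _ |>.bddAbove
  have hl : ∀ i, ConvexOn ℝ Set.univ fun r ↦ l i (1, r) := fun i ↦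
    ((l i).toLinearMap.convexOn convex_univ).comp_affineMap
      ((AffineMap.const ℝ ℝ (1 : ℝ)).prod (AffineMap.id ℝ ℝ))
  have hf : ConvexOn ℝ Set.univ f := convexOn_ciSup hl fun r _ ↦ hbdd r
  have hmean : ∑ i, c i * f (x i / c i) ≤ ∑ j, d j * f (y j / d j) := by
    refine sum_mul_le_sum_mul_of_convexOn hf hsum fun t ↦ ?_
    simpa only [mul_abs_div_sub (hc _), mul_abs_div_sub (hd _)] using h t
  choose σ hσ using fun r ↦ exists_eq_ciSup_of_finite (f := fun i ↦ l i (1, r))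
  have hhomog : ∀ (i : ι) {a : ℝ} (b : ℝ), 0 < a → l i (a, b) = a * l i (1, b / a) :=
    fun i a b ha ↦ by
      rw [← smul_eq_mul, ← map_smul]
      simp [mul_div_cancel₀ b ha.ne']
  refine ⟨fun j ↦ σ (y j / d j), ?_⟩
  calc ∑ i, l i (c i, x i) = ∑ i, c i * l i (1, x i / c i) := by simp only [hhomog _ _ (hc _)]
    _ ≤ ∑ i, c i * f (x i / c i) := by
      gcongr with i
      exacts [(hc i).le, le_ciSup (hbdd _) i]
    _ ≤ ∑ j, d j * f (y j / d j) := hmean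
    _ = ∑ j, l (σ (y j / d j)) (d j, y j) := by simp only [f, hhomog _ _ (hd _), hσ]

theorem stmt2_general {c x : ι → ℝ} {d y : κ → ℝ} (hc : ∀ i, 0 < c i) (hd : ∀ j, 0 < d j)
    (hsum : ∑ i, c i = ∑ j, d j) :
    (∃ A : Matrix ι κ ℝ, (∀ j, A.col j ∈ stdSimplex ℝ ι) ∧ A.mulVec d = c ∧ A.mulVec y = x) ↔
      ∀ t : ℝ, ∑ i, |x i - t * c i| ≤ ∑ j, |y j - t * d j| := by
  constructor
  · rintro ⟨A, hA, rfl, rfl⟩ t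
    have hA_nonneg : ∀ i j, 0 ≤ A i j := fun i j ↦ (hA j).1 i
    have hcol : ∀ j, ∑ i, |A i j| ≤ 1 := fun j ↦ by
      simp only [abs_of_nonneg (hA_nonneg _ _)]
      exact (hA j).2.le
    simpa [Matrix.mulVec_sub, Matrix.mulVec_smul] using sum_abs_mulVec_le hcol (y - t • d)
  · intro h
    obtain ⟨A, hA, hAu⟩ := exists_colStochastic_sum_smul_eq
      (exists_sum_dual_le_of_sum_abs_sub_le hc hd hsum h)
    refine ⟨A, hA, funext fun i ↦ ?_, funext fun i ↦ ?_⟩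
    · simpa [Matrix.mulVec, dotProduct, Prod.fst_sum] using congrArg Prod.fst (hAu i)
    · simpa [Matrix.mulVec, dotProduct, Prod.snd_sum] using congrArg Prod.snd (hAu i)

end ColumnStochastic

lemma dMaj_iff_exists_colStochastic {n : ℕ} {d x y : Fin n → ℝ} :
    DMaj d x y ↔ ∃ A : Matrix (Fin n) (Fin n) ℝ,
      (∀ j, A.col j ∈ stdSimplex ℝ (Fin n)) ∧ A.mulVec d = d ∧ A.mulVec y = x :=
  ⟨fun ⟨A, ⟨hA, hA_sum, hAd⟩, hx⟩ ↦ ⟨A, fun j ↦ ⟨fun i ↦ hA i j, hA_sum j⟩, hAd, hx.symm⟩,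
    fun ⟨A, hA, hAd, hx⟩ ↦ ⟨A, ⟨fun i j ↦ (hA j).1 i, fun j ↦ (hA j).2, hAd⟩, hx.symm⟩⟩

theorem stmt2 {n : ℕ} (d x y : Fin n → ℝ) (hd : ∀ i, 0 < d i) :
    DMaj d x y ↔
      ∀ t : ℝ, ∑ j, |x j - t * d j| ≤ ∑ j, |y j - t * d j| := by
  rw [dMaj_iff_exists_colStochastic, stmt2_general hd hd rfl]
end

section
/- Let y ∈ ℝ^n have nonnegative entries with y_1 ≤ y_2 ≤ … ≤ y_n, and let d ∈ ℝ^n have strictly positive entries with d_1 ≥ d_2 ≥ … ≥ d_n. Then for every permutation σ of {1,…,n}, the permuted vector (y_{σ(1)}, …, y_{σ(n)}) is d-majorized by y. -/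
open Matrix

section PairExchange

variable {ι R : Type*} [DecidableEq ι]

/-- The matrix moving the fraction `p` of the mass at `i` to `j` and the fraction `q` of the mass
at `j` to `i`, written as a rank-one perturbation of the identity. For `p = q` this is the classical
`T`-transform of majorization theory. -/
def pairExchange [Ring R] (i j : ι) (p q : R) : Matrix ι ι R :=
  1 - vecMulVec (Pi.single i 1 - Pi.single j 1) (Pi.single i p - Pi.single j q)

theorem sub_smul_single_sub_single_eq_comp_swap [Ring R] (v : ι → R) (i j : ι) :
    v - (v i - v j) • (Pi.single i 1 - Pi.single j 1) = v ∘ Equiv.swap i j := by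
  ext k
  rcases eq_or_ne k i with rfl | hki
  · rcases eq_or_ne k j with rfl | hkj <;> simp [*]
  · rcases eq_or_ne k j with rfl | hkj <;> simp [*, Equiv.swap_apply_of_ne_of_ne]

variable [Fintype ι] {i j : ι} {p q : R}

theorem pairExchange_mulVec [CommRing R] (v : ι → R) :
    pairExchange i j p q *ᵥ v =
      v - (p * v i - q * v j) • (Pi.single i 1 - Pi.single j 1) := by
  rw [pairExchange, sub_mulVec, one_mulVec, vecMulVec_mulVec, sub_dotProduct, single_dotProduct,
    single_dotProduct, op_smul_eq_smul]

theorem pairExchange_mem_colStochastic [Ring R] [PartialOrder R] [IsOrderedRing R]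
    (hp : p ∈ Set.Icc 0 1) (hq : q ∈ Set.Icc 0 1) :
    pairExchange i j p q ∈ colStochastic R ι := by
  refine mem_colStochastic.2 ⟨fun k l => ?_, ?_⟩
  · have single_nonneg (m : ι) : 0 ≤ (Pi.single m 1 : ι → R) k :=
      (Pi.single_nonneg.2 zero_le_one : (0 : ι → R) ≤ Pi.single m 1) k
    have combination_nonneg {t : R} (ht : t ∈ Set.Icc 0 1) (m m' : ι) :
        0 ≤ (Pi.single m 1 : ι → R) k * (1 - t) + (Pi.single m' 1 : ι → R) k * t :=
      add_nonneg (mul_nonneg (single_nonneg m) (sub_nonneg.2 ht.2))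
        (mul_nonneg (single_nonneg m') ht.1)
    rcases eq_or_ne i j with rfl | hij
    · simpa [pairExchange, one_eq_pi_single, Pi.single_comm] using single_nonneg l
    rcases eq_or_ne l i with rfl | hli
    · convert combination_nonneg hp l j using 1
      simp [pairExchange, vecMulVec_apply, one_eq_pi_single, Pi.single_comm, hij, mul_sub,
        sub_mul, sub_add]
    rcases eq_or_ne l j with rfl | hlj
    · convert combination_nonneg hq l i using 1
      simp [pairExchange, vecMulVec_apply, one_eq_pi_single, Pi.single_comm, hij.symm, mul_sub,
        sub_mul, sub_add]
    · simpa [pairExchange, vecMulVec_apply, one_eq_pi_single, Pi.single_comm, hli, hlj]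
        using single_nonneg l
  · simp [pairExchange, vecMul_sub, vecMul_vecMulVec, dotProduct_sub]

end PairExchange

theorem exists_exchange_fractions {K : Type*} [Field K] [LinearOrder K] [IsStrictOrderedRing K]
    {a b x y : K} (hb : 0 ≤ b) (hba : b ≤ a) (hx : 0 ≤ x) (hxy : x ≤ y) :
    ∃ p ∈ Set.Icc (0 : K) 1, ∃ q ∈ Set.Icc (0 : K) 1,
      p * a = q * b ∧ p * x - q * y = x - y := by
  have ha : 0 ≤ a := hb.trans hba
  have hax : 0 ≤ a * (y - x) := mul_nonneg ha (sub_nonneg.2 hxy)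
  have hbx : 0 ≤ b * (y - x) := mul_nonneg hb (sub_nonneg.2 hxy)
  have hle : a * (y - x) ≤ a * y - b * x := by
    linarith [mul_le_mul_of_nonneg_right hba hx]
  have hle' : b * (y - x) ≤ a * y - b * x :=
    (mul_le_mul_of_nonneg_right hba (sub_nonneg.2 hxy)).trans hle
  -- Cramer's rule: the determinant `a * y - b * x` vanishes only if `a = b = 0` or `x = y`.
  rcases (hax.trans hle).eq_or_lt with hD | hD
  · rcases mul_eq_zero.1 (hax.antisymm' (hle.trans hD.ge)) with ha0 | hyx
    · have hb0 : b = 0 := hb.antisymm' (hba.trans ha0.le)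
      exact ⟨1, by simp, 1, by simp, by simp [ha0, hb0]⟩
    · exact ⟨0, by simp, 0, by simp, by ring, by linear_combination hyx⟩
  · refine ⟨b * (y - x) / (a * y - b * x), ⟨div_nonneg hbx hD.le, (div_le_one hD).2 hle'⟩,
      a * (y - x) / (a * y - b * x), ⟨div_nonneg hax hD.le, (div_le_one hD).2 hle⟩, by ring, ?_⟩
    have cancel : (a * y - b * x) / (a * y - b * x) = 1 := div_self hD.ne'
    linear_combination (x - y) * cancel

theorem exists_perm_antitone_monotone_of_antivary {n : ℕ} {α β : Type*} [LinearOrder α]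
    [LinearOrder β] {f : Fin n → α} {g : Fin n → β} (h : Antivary f g) :
    ∃ τ : Equiv.Perm (Fin n), Antitone (f ∘ τ) ∧ Monotone (g ∘ τ) := by
  -- The lexicographic key also sorts `f` on the level sets of `g`, where `h` gives no information.
  let key : Fin n → β ×ₗ αᵒᵈ := fun i => toLex (g i, OrderDual.toDual (f i))
  have hkey : Monotone (key ∘ Tuple.sort key) := Tuple.monotone_sort key
  refine ⟨Tuple.sort key, fun i j hij => ?_, fun i j hij => Prod.Lex.monotone_fst _ _ (hkey hij)⟩
  rcases Prod.Lex.toLex_le_toLex.1 (hkey hij) with hlt | ⟨-, hle⟩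
  · exact h hlt
  · exact hle

section Majorization

variable {n : ℕ} {d x y z : Fin n → ℝ}

theorem isDStochastic_iff_mem_colStochastic {A : Matrix (Fin n) (Fin n) ℝ} :
    IsDStochastic d A ↔ A ∈ colStochastic ℝ (Fin n) ∧ A *ᵥ d = d := by
  rw [IsDStochastic, mem_colStochastic_iff_sum, and_assoc]

namespace DMaj

theorem refl (d y : Fin n → ℝ) : DMaj d y y :=
  ⟨1, isDStochastic_iff_mem_colStochastic.2 ⟨one_mem _, one_mulVec d⟩, (one_mulVec y).symm⟩

theorem trans (hxy : DMaj d x y) (hyz : DMaj d y z) : DMaj d x z := by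
  obtain ⟨A, hA, rfl⟩ := hxy
  obtain ⟨B, hB, rfl⟩ := hyz
  rw [isDStochastic_iff_mem_colStochastic] at hA hB
  refine ⟨A * B, isDStochastic_iff_mem_colStochastic.2 ⟨mul_mem hA.1 hB.1, ?_⟩, mulVec_mulVec ..⟩
  rw [← mulVec_mulVec, hB.2, hA.2]

theorem of_comp_perm (τ : Equiv.Perm (Fin n)) (h : DMaj (d ∘ τ) (x ∘ τ) (y ∘ τ)) :
    DMaj d x y := by
  obtain ⟨A, ⟨hA0, hA1, hAd⟩, hAy⟩ := h
  have mulVec_eq (v : Fin n → ℝ) : A.submatrix τ.symm τ.symm *ᵥ v = (A *ᵥ (v ∘ τ)) ∘ τ.symm :=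
    submatrix_mulVec_equiv A v τ.symm τ.symm
  refine ⟨A.submatrix τ.symm τ.symm, ⟨fun i j => hA0 _ _, fun j => ?_, ?_⟩, ?_⟩
  · exact (Equiv.sum_comp τ.symm fun i => A i (τ.symm j)).trans (hA1 _)
  · rw [mulVec_eq, hAd, Function.comp_assoc, τ.self_comp_symm, Function.comp_id]
  · rw [mulVec_eq, ← hAy, Function.comp_assoc, τ.self_comp_symm, Function.comp_id]

theorem comp_swap {i j : Fin n} (hdj : 0 ≤ d j) (hdij : d j ≤ d i) (hyi : 0 ≤ y i)
    (hyij : y i ≤ y j) : DMaj d (y ∘ Equiv.swap i j) y := by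
  obtain ⟨p, hp, q, hq, hpq, hpqy⟩ := exists_exchange_fractions hdj hdij hyi hyij
  refine ⟨pairExchange i j p q, isDStochastic_iff_mem_colStochastic.2
    ⟨pairExchange_mem_colStochastic hp hq, ?_⟩, ?_⟩
  · rw [pairExchange_mulVec, hpq, sub_self, zero_smul, sub_zero]
  · rw [pairExchange_mulVec, hpqy, sub_smul_single_sub_single_eq_comp_swap]

theorem comp_sort (hd0 : ∀ i, 0 ≤ d i) (hd : Antitone d) (hx0 : ∀ i, 0 ≤ x i) :
    DMaj d x (x ∘ Tuple.sort x) := by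
  refine Tuple.bubble_sort_induction' (DMaj.refl d x) fun σ i j hij hlt hx => hx.trans ?_
  have h := comp_swap (y := (x ∘ σ) ∘ Equiv.swap i j) (hd0 j) (hd hij.le) (hx0 _)
    (by simpa using hlt.le)
  rwa [Function.comp_assoc, ← Equiv.Perm.coe_mul, Equiv.swap_mul_self, Equiv.Perm.coe_one,
    Function.comp_id] at h

end DMaj

theorem stmt6_general (hy0 : ∀ i, 0 ≤ y i) (hd0 : ∀ i, 0 ≤ d i) (hdy : Antivary d y)
    (σ : Equiv.Perm (Fin n)) : DMaj d (y ∘ σ) y := by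
  obtain ⟨τ, hd, hy⟩ := exists_perm_antitone_monotone_of_antivary hdy
  have hsort : (y ∘ σ ∘ τ) ∘ Tuple.sort (y ∘ σ ∘ τ) = y ∘ τ :=
    (Tuple.comp_perm_comp_sort_eq_comp_sort (σ := σ * τ)).trans
      (Tuple.comp_sort_eq_comp_iff_monotone.2 hy).symm
  refine DMaj.of_comp_perm τ ?_
  rw [← hsort]
  exact DMaj.comp_sort (fun i => hd0 _) hd fun i => hy0 _

end Majorization

theorem stmt6 {n : ℕ} (y d : Fin n → ℝ) (hy0 : ∀ i, 0 ≤ y i) (hy : Monotone y)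
    (hd : ∀ i, 0 < d i) (hd' : Antitone d) (σ : Equiv.Perm (Fin n)) :
    DMaj d (fun i => y (σ i)) y :=
  stmt6_general hy0 (fun i => (hd i).le) (hd'.antivary hy) σ
end

section
/- Let d ∈ ℝ^n have all entries strictly positive. Then d ≺_d x for every x ∈ ℝ^n with Σ_i x_i = Σ_i d_i, and d is the unique such minimal element: if z ∈ ℝ^n satisfies Σ_i z_i = Σ_i d_i and z ≺_d x for all x ∈ ℝ^n with Σ_i x_i = Σ_i d_i, then z = d. -/
/-!
The rank-one matrix all of whose columns equal a probability vector `p` sends every `x` to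
`(∑ i, x i) • p`. A nonnegative vector `d` has the form `(∑ i, d i) • p`, so this single matrix
fixes `d` and collapses the whole hyperplane `∑ i, x i = ∑ i, d i` onto `d`. Conversely, a
`d`-stochastic matrix can send `d` nowhere but to itself, so nothing else is below `d`.
-/

open Matrix

section ProbabilityVector

variable {ι : Type*} [Fintype ι]

theorem vecMulVec_one_mulVec {R : Type*} [CommSemiring R] (p x : ι → R) :
    vecMulVec p 1 *ᵥ x = (∑ i, x i) • p := by
  rw [vecMulVec_mulVec, one_dotProduct, op_smul_eq_smul]

theorem exists_mem_stdSimplex_eq_sum_smul {𝕜 : Type*} [Field 𝕜] [LinearOrder 𝕜]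
    [IsStrictOrderedRing 𝕜] [Nonempty ι] {d : ι → 𝕜} (hd : 0 ≤ d) :
    ∃ p ∈ stdSimplex 𝕜 ι, d = (∑ i, d i) • p := by
  classical
  have sum_nonneg : 0 ≤ ∑ i, d i := Finset.sum_nonneg fun i _ => hd i
  rcases sum_nonneg.eq_or_lt with sum_zero | sum_pos
  · have d_zero : d = 0 := (Fintype.sum_eq_zero_iff_of_nonneg hd).1 sum_zero.symm
    exact ⟨_, single_mem_stdSimplex 𝕜 (Classical.arbitrary ι), by simp [d_zero]⟩
  · refine ⟨(∑ i, d i)⁻¹ • d, ⟨fun i => ?_, ?_⟩, (smul_inv_smul₀ sum_pos.ne' d).symm⟩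
    · exact mul_nonneg (inv_nonneg.2 sum_nonneg) (hd i)
    · simp only [Pi.smul_apply, smul_eq_mul]
      rw [← Finset.mul_sum, inv_mul_cancel₀ sum_pos.ne']

end ProbabilityVector

section DMajorization

variable {n : ℕ} {d p x z : Fin n → ℝ}

theorem isDStochastic_vecMulVec_one (hp : p ∈ stdSimplex ℝ (Fin n))
    (hd : d = (∑ i, d i) • p) : IsDStochastic d (vecMulVec p 1) := by
  refine ⟨fun i j => ?_, fun j => ?_, (vecMulVec_one_mulVec p d).trans hd.symm⟩
  · simpa only [vecMulVec_apply, Pi.one_apply, mul_one] using hp.1 i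
  · simpa only [vecMulVec_apply, Pi.one_apply, mul_one] using hp.2

theorem dMaj_refl (d x : Fin n → ℝ) : DMaj d x x :=
  ⟨1, ⟨fun _ _ => by rw [one_apply]; positivity, fun _ => by simp [one_apply], one_mulVec d⟩,
    (one_mulVec x).symm⟩

theorem dMaj_of_sum_eq (hd : 0 ≤ d) (hx : ∑ i, x i = ∑ i, d i) : DMaj d d x := by
  rcases isEmpty_or_nonempty (Fin n) with _ | _
  · exact Subsingleton.elim d x ▸ dMaj_refl d d
  · obtain ⟨p, hp, hdp⟩ := exists_mem_stdSimplex_eq_sum_smul hd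
    refine ⟨vecMulVec p 1, isDStochastic_vecMulVec_one hp hdp, ?_⟩
    rw [vecMulVec_one_mulVec, hx, ← hdp]

theorem eq_of_dMaj_self (h : DMaj d z d) : z = d := by
  obtain ⟨A, ⟨-, -, A_fixes_d⟩, rfl⟩ := h
  exact A_fixes_d

end DMajorization

theorem stmt8_general {n : ℕ} {d : Fin n → ℝ} (hd : 0 ≤ d) (z : Fin n → ℝ) :
    (∀ x : Fin n → ℝ, ∑ i, x i = ∑ i, d i → DMaj d z x) ↔ z = d := by
  refine ⟨fun h => eq_of_dMaj_self (h d rfl), ?_⟩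
  rintro rfl x hx
  exact dMaj_of_sum_eq hd hx

theorem stmt8 {n : ℕ} (d : Fin n → ℝ) (hd : ∀ i, 0 < d i) :
    (∀ x : Fin n → ℝ, ∑ i, x i = ∑ i, d i → DMaj d d x) ∧
    (∀ z : Fin n → ℝ, (∑ i, z i = ∑ i, d i) →
      (∀ x : Fin n → ℝ, ∑ i, x i = ∑ i, d i → DMaj d z x) → z = d) :=
  have minimal_iff := stmt8_general fun i => (hd i).le
  ⟨(minimal_iff d).2 rfl, fun z _ => (minimal_iff z).1⟩
end

section
/- Let d ∈ ℝ^n have all entries strictly positive and let k be an index at which d attains its minimum (d_k ≤ d_j for all j). Then x ≺_d (Σ_i d_i)·e_k for every x ∈ ℝ^n with nonnegative entries and Σ_i x_i = Σ_i d_i, where e_k is the k-th standard basis vector. Moreover, (Σ_i d_i)·e_k is the unique vector w with nonnegative entries and Σ_i w_i = Σ_i d_i satisfying x ≺_d w for all such x if and only if d_k is the unique minimal entry of d (i.e., d_k < d_j for all j ≠ k). -/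
/-!
Write `S = ∑ i, d i`. A matrix whose `k`-th column is `p` and whose other columns all equal `q` maps
`y` to `y k • p + (∑ j, y j - y k) • q`. Taking for `p` the normalisation of `x`, such a matrix
sends `S • e_k` to `x`, and it fixes `d` once `q` is the normalisation of `d - d k • p`, a vector
which is nonnegative because `d k` is minimal.

If the minimum is attained at a second index `j`, then `S • e_j` is another maximum. Conversely, let
a `d`-stochastic `A` map `w` to `S • e_k`. As `w` has total `S`, every column `j` with `w j ≠ 0` has
`A k j = 1`, and comparing the `k`-th entries of `A d = d` gives `d j ≤ d k`.
-/

open Matrix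

section Matrix

variable {m ι R : Type*}

lemma updateCol_replicateCol_mulVec [Fintype ι] [DecidableEq ι] [CommRing R] (p q : m → R) (k : ι)
    (y : ι → R) :
    (replicateCol ι q).updateCol k p *ᵥ y = y k • p + (∑ j, y j - y k) • q := by
  have hsum : ∑ j, y j - y k = ∑ j ∈ Finset.univ.erase k, y j := by
    rw [← Finset.add_sum_erase _ y (Finset.mem_univ k), add_sub_cancel_left]
  rw [mulVec_eq_sum, ← Finset.add_sum_erase _ _ (Finset.mem_univ k), hsum, Finset.sum_smul]
  congr 1
  · ext i
    simp [mul_comm]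
  · refine Finset.sum_congr rfl fun j hj ↦ ?_
    ext i
    simp [Finset.ne_of_mem_erase hj, mul_comm]

lemma apply_mul_le_mulVec [Fintype ι] [Semiring R] [PartialOrder R] [IsOrderedRing R]
    {A : Matrix m ι R} {v : ι → R} {i : m} (hA : ∀ j, 0 ≤ A i j) (hv : ∀ j, 0 ≤ v j) (j : ι) :
    A i j * v j ≤ (A *ᵥ v) i :=
  Finset.single_le_sum (f := fun j ↦ A i j * v j) (fun j _ ↦ mul_nonneg (hA j) (hv j))
    (Finset.mem_univ j)

lemma eq_zero_of_sum_le_mulVec_apply [Fintype ι] [Semiring R] [LinearOrder R]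
    [IsStrictOrderedRing R] {A : Matrix m ι R} {w : ι → R} {i : m} {j : ι}
    (hA : ∀ j, A i j ≤ 1) (hw : ∀ j, 0 ≤ w j) (hsum : ∑ j, w j ≤ (A *ᵥ w) i)
    (hj : A i j < 1) : w j = 0 := by
  have hterm : ∀ j, A i j * w j ≤ w j := fun j ↦ mul_le_of_le_one_left (hw j) (hA j)
  by_contra hne
  have hlt : A i j * w j < w j := mul_lt_of_lt_one_left ((hw j).lt_of_ne' hne) hj
  exact hsum.not_gt (Finset.sum_lt_sum (fun j _ ↦ hterm j) ⟨j, Finset.mem_univ j, hlt⟩)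

end Matrix

lemma exists_mem_stdSimplex_sum_smul_eq {ι 𝕜 : Type*} [Fintype ι] [Nonempty ι] [Semifield 𝕜]
    [LinearOrder 𝕜] [IsStrictOrderedRing 𝕜] {v : ι → 𝕜} (hv : ∀ i, 0 ≤ v i) :
    ∃ q ∈ stdSimplex 𝕜 ι, (∑ i, v i) • q = v := by
  classical
  have hsum : 0 ≤ ∑ i, v i := Finset.sum_nonneg fun i _ ↦ hv i
  rcases hsum.eq_or_lt with h0 | hpos
  · have hzero : v = 0 := (Fintype.sum_eq_zero_iff_of_nonneg hv).1 h0.symm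
    exact ⟨_, single_mem_stdSimplex 𝕜 (Classical.arbitrary ι), by simp [hzero]⟩
  · refine ⟨(∑ i, v i)⁻¹ • v, ⟨fun i ↦ mul_nonneg (inv_nonneg.2 hsum) (hv i), ?_⟩,
      smul_inv_smul₀ hpos.ne' v⟩
    simp only [Pi.smul_apply, smul_eq_mul, ← Finset.mul_sum, inv_mul_cancel₀ hpos.ne']

section Majorization

variable {n : ℕ} {d : Fin n → ℝ} {k : Fin n}

lemma IsDStochastic.mem_colStochastic {A : Matrix (Fin n) (Fin n) ℝ} (hA : IsDStochastic d A) :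
    A ∈ colStochastic ℝ (Fin n) :=
  mem_colStochastic_iff_sum.2 ⟨hA.1, hA.2.1⟩

lemma isDStochastic_updateCol_replicateCol {p q : Fin n → ℝ} (hp : p ∈ stdSimplex ℝ (Fin n))
    (hq : q ∈ stdSimplex ℝ (Fin n)) (hd : d k • p + (∑ i, d i - d k) • q = d) :
    IsDStochastic d ((replicateCol (Fin n) q).updateCol k p) := by
  refine ⟨fun i j ↦ ?_, fun j ↦ ?_, (updateCol_replicateCol_mulVec p q k d).trans hd⟩ <;>
    rcases eq_or_ne j k with rfl | hj
  · simpa using hp.1 i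
  · simpa [hj] using hq.1 i
  · simpa using hp.2
  · simpa [hj] using hq.2

lemma dMaj_smul_single {p : Fin n → ℝ} (hp : p ∈ stdSimplex ℝ (Fin n)) (hle : d k • p ≤ d)
    (s : ℝ) : DMaj d (s • p) (Pi.single k s) := by
  have : Nonempty (Fin n) := ⟨k⟩
  obtain ⟨q, hq, hqd⟩ := exists_mem_stdSimplex_sum_smul_eq (v := d - d k • p)
    fun i ↦ sub_nonneg.2 (hle i)
  have hsum : ∑ i, (d - d k • p) i = ∑ i, d i - d k := by
    simp only [Pi.sub_apply, Pi.smul_apply, smul_eq_mul, Finset.sum_sub_distrib, ← Finset.mul_sum,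
      hp.2, mul_one]
  rw [hsum] at hqd
  have hfix : d k • p + (∑ i, d i - d k) • q = d := by rw [hqd, add_sub_cancel]
  refine ⟨_, isDStochastic_updateCol_replicateCol hp hq hfix, ?_⟩
  rw [updateCol_replicateCol_mulVec, Fintype.sum_pi_single', Pi.single_eq_same, sub_self,
    zero_smul, add_zero]

lemma dMaj_single_sum (hd : 0 ≤ d k) (hk : ∀ j, d k ≤ d j) {x : Fin n → ℝ}
    (hx : ∀ i, 0 ≤ x i) : DMaj d x (Pi.single k (∑ i, x i)) := by
  have : Nonempty (Fin n) := ⟨k⟩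
  obtain ⟨p, hp, hpx⟩ := exists_mem_stdSimplex_sum_smul_eq hx
  have hle : d k • p ≤ d := fun i ↦
    (mul_le_of_le_one_right hd (mem_Icc_of_mem_stdSimplex hp i).2).trans (hk i)
  simpa only [hpx] using dMaj_smul_single hp hle (∑ i, x i)

lemma DMaj.eq_zero_of_lt {x w : Fin n → ℝ} {j : Fin n} (h : DMaj d x w) (hd : ∀ i, 0 ≤ d i)
    (hw : ∀ i, 0 ≤ w i) (hsum : ∑ i, w i ≤ x k) (hj : d k < d j) : w j = 0 := by
  obtain ⟨A, hA, rfl⟩ := h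
  have hle : A k j * d j ≤ d k := by
    simpa only [hA.2.2] using apply_mul_le_mulVec (hA.1 k) hd j
  have hlt : A k j < 1 := lt_of_mul_lt_mul_right (by linarith) (hd j)
  exact eq_zero_of_sum_le_mulVec_apply
    (fun _ ↦ le_one_of_mem_colStochastic hA.mem_colStochastic) hw hsum hlt

lemma eq_single_of_dMaj_single (hd : 0 ≤ d k) (hk : ∀ j, j ≠ k → d k < d j)
    {w : Fin n → ℝ} (hw : ∀ i, 0 ≤ w i) (h : DMaj d (Pi.single k (∑ i, w i)) w) :
    w = Pi.single k (∑ i, w i) := by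
  have hnonneg : ∀ i, 0 ≤ d i := fun i ↦ by
    rcases eq_or_ne i k with rfl | hi
    · exact hd
    · exact hd.trans (hk i hi).le
  have hzero : ∀ j, j ≠ k → w j = 0 := fun j hj ↦
    h.eq_zero_of_lt hnonneg hw (Pi.single_eq_same (M := fun _ ↦ ℝ) k _).ge (hk j hj)
  ext i
  rcases eq_or_ne i k with rfl | hi
  · rw [Pi.single_eq_same, Fintype.sum_eq_single i hzero]
  · rw [hzero i hi, Pi.single_eq_of_ne hi]

end Majorization

theorem stmt9 {n : ℕ} (d : Fin n → ℝ) (hd : ∀ i, 0 < d i) (k : Fin n)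
    (hk : ∀ j, d k ≤ d j) :
    (∀ x : Fin n → ℝ, (∀ i, 0 ≤ x i) → ∑ i, x i = ∑ i, d i →
      DMaj d x (fun i => if i = k then ∑ j, d j else 0)) ∧
    ((∀ w : Fin n → ℝ, (∀ i, 0 ≤ w i) → (∑ i, w i = ∑ i, d i) →
        (∀ x : Fin n → ℝ, (∀ i, 0 ≤ x i) → ∑ i, x i = ∑ i, d i → DMaj d x w) →
        w = fun i => if i = k then ∑ j, d j else 0) ↔
      (∀ j, j ≠ k → d k < d j)) := by
  have hite : (fun i ↦ if i = k then ∑ j, d j else 0) = Pi.single k (∑ i, d i) :=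
    funext fun i ↦ (Pi.single_apply k _ i).symm
  have hS : 0 < ∑ i, d i := Finset.sum_pos (fun i _ ↦ hd i) ⟨k, Finset.mem_univ k⟩
  have hnonneg : ∀ j, 0 ≤ (Pi.single j (∑ i, d i) : Fin n → ℝ) := fun j ↦
    Pi.single_nonneg.2 hS.le
  have hsum : ∀ j, ∑ i, (Pi.single j (∑ i, d i) : Fin n → ℝ) i = ∑ i, d i := fun j ↦
    Fintype.sum_pi_single' j _
  have hmax : ∀ j, d j = d k → ∀ x : Fin n → ℝ, (∀ i, 0 ≤ x i) → ∑ i, x i = ∑ i, d i →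
      DMaj d x (Pi.single j (∑ i, d i)) := fun j hj x hx hxd ↦
    hxd ▸ dMaj_single_sum (hd j).le (hj.symm ▸ hk) hx
  rw [hite]
  refine ⟨hmax k rfl, fun huniq j hj ↦ (hk j).lt_of_ne fun hdj ↦ ?_, fun hlt w hw hwd hwmax ↦ ?_⟩
  · have heq := congrFun (huniq _ (hnonneg j) (hsum j) (hmax j hdj.symm)) j
    rw [Pi.single_eq_same, Pi.single_eq_of_ne hj] at heq
    exact hS.ne' heq
  · have hkw : DMaj d (Pi.single k (∑ i, d i)) w := hwmax _ (hnonneg k) (hsum k)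
    rw [← hwd] at hkw ⊢
    exact eq_single_of_dMaj_single (hd k).le hlt hw hkw
end

section
/- Let z ∈ ℝ^n (with n ≥ 2) and write z = z₊ − z₋ for its entrywise positive and negative parts. Then the set {x ∈ ℝ^n : Σ_i x_i = Σ_i z_i and ‖x‖₁ ≤ ‖z‖₁} equals the set {x ∈ ℝ^n : x ≺ ẑ}, where ẑ := (Σ_i (z₊)_i, −Σ_i (z₋)_i, 0, …, 0) ∈ ℝ^n. -/
/-- Classical majorization: `x ≺ y` iff a doubly stochastic matrix maps `y` to `x`. -/
def Maj {n : ℕ} (x y : Fin n → ℝ) : Prop :=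
  ∃ A : Matrix (Fin n) (Fin n) ℝ, (∀ i j, 0 ≤ A i j) ∧ (∀ j, ∑ i, A i j = 1) ∧
    (∀ i, ∑ j, A i j = 1) ∧ x = A.mulVec y

/-!
By Birkhoff's theorem, the vectors majorized by `y` form the convex hull of the permutations of `y`.
For `y = (P, -N, 0, …, 0)` with `P, N ≥ 0` these permutations are the vectors `P eᵢ - N eⱼ`,
`i ≠ j`. The slice `∑ xᵢ = P - N`, `‖x‖₁ ≤ P + N` of the `ℓ¹` ball is convex and contains them.
Conversely, on the slice a linear functional `∑ wᵢ xᵢ` is at most `P max w - N min w`, a value it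
attains at some `P eᵢ - N eⱼ`, so the Hahn–Banach theorem puts the slice inside their convex hull.
The choice `P = ∑ (z₊)ᵢ`, `N = ∑ (z₋)ᵢ` gives `∑ zᵢ = P - N` and `‖z‖₁ = P + N`.
-/

open Matrix

section Majorization

variable {n : ℕ}

theorem maj_iff_exists_mem_doublyStochastic {x y : Fin n → ℝ} :
    Maj x y ↔ ∃ A ∈ doublyStochastic ℝ (Fin n), A *ᵥ y = x := by
  simp only [Maj, mem_doublyStochastic_iff_sum]
  exact ⟨fun ⟨A, hA, hcol, hrow, hx⟩ => ⟨A, ⟨hA, hrow, hcol⟩, hx.symm⟩,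
    fun ⟨A, ⟨hA, hrow, hcol⟩, hx⟩ => ⟨A, hA, hcol, hrow, hx.symm⟩⟩

theorem setOf_maj_eq_convexHull (y : Fin n → ℝ) :
    {x | Maj x y} = convexHull ℝ (Set.range fun σ : Equiv.Perm (Fin n) => y ∘ σ) := by
  let mulVecRight : Matrix (Fin n) (Fin n) ℝ →ₗ[ℝ] Fin n → ℝ := (mulVecBilin ℝ ℝ).flip y
  calc {x | Maj x y}
      = mulVecRight '' doublyStochastic ℝ (Fin n) :=
        Set.ext fun x => maj_iff_exists_mem_doublyStochastic
    _ = convexHull ℝ (mulVecRight '' Set.range fun σ : Equiv.Perm (Fin n) => σ.permMatrix ℝ) := by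
        rw [doublyStochastic_eq_convexHull_permMatrix, LinearMap.image_convexHull]; rfl
    _ = convexHull ℝ (Set.range fun σ : Equiv.Perm (Fin n) => y ∘ σ) := by
        rw [← Set.range_comp]
        congr! 2
        funext σ
        exact permMatrix_mulVec σ

end Majorization

section Dipoles

variable {ι : Type*} [DecidableEq ι]

/-- The vectors `P eᵢ - N eⱼ` with `i ≠ j`: the permutations of `(P, -N, 0, …, 0)`, whose convex
hull is the slice `l1BallSlice (P - N) (P + N)` of an `ℓ¹` ball. -/
def dipoles (P N : ℝ) : Set (ι → ℝ) :=
  {v | ∃ i j, i ≠ j ∧ Pi.single i P - Pi.single j N = v}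

theorem dipoles_finite [Finite ι] (P N : ℝ) : (dipoles P N : Set (ι → ℝ)).Finite :=
  (Set.finite_range fun p : ι × ι => (Pi.single p.1 P - Pi.single p.2 N : ι → ℝ)).subset
    fun _ ⟨i, j, _, hv⟩ => ⟨(i, j), hv⟩

theorem range_single_sub_single_comp_perm (P N : ℝ) {i j : ι} (hij : i ≠ j) :
    Set.range (fun σ : Equiv.Perm ι => (Pi.single i P - Pi.single j N : ι → ℝ) ∘ σ) =
      dipoles P N := by
  have comp_perm (σ : Equiv.Perm ι) : (Pi.single i P - Pi.single j N : ι → ℝ) ∘ σ =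
      Pi.single (σ.symm i) P - Pi.single (σ.symm j) N := by
    rw [Pi.sub_comp, Pi.single_comp_equiv, Pi.single_comp_equiv]
  refine Set.Subset.antisymm ?_ ?_
  · rintro _ ⟨σ, rfl⟩
    exact ⟨σ.symm i, σ.symm j, σ.symm.injective.ne hij, (comp_perm σ).symm⟩
  · rintro _ ⟨k, l, hkl, rfl⟩
    obtain ⟨σ, hk, hl⟩ := MulAction.is_two_pretransitive_iff.mp
      (Equiv.Perm.isMultiplyPretransitive ι 2) hkl hij
    refine ⟨σ, (comp_perm σ).trans ?_⟩
    rw [← hk, ← hl, Equiv.Perm.smul_def, Equiv.Perm.smul_def, σ.symm_apply_apply,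
      σ.symm_apply_apply]

end Dipoles

theorem exists_ne_forall_le_and_le {ι α : Type*} [Finite ι] [Nontrivial ι] [LinearOrder α]
    (w : ι → α) : ∃ i j, i ≠ j ∧ ∀ k, w j ≤ w k ∧ w k ≤ w i := by
  obtain ⟨i, hi⟩ := Finite.exists_max w
  obtain ⟨j, hj⟩ := Finite.exists_min w
  by_cases hij : i = j
  · obtain ⟨k, hk⟩ := exists_ne i
    exact ⟨i, k, hk.symm, fun l => ⟨(hi k).trans (hij ▸ hj l), hi l⟩⟩
  · exact ⟨i, j, hij, fun k => ⟨hj k, hi k⟩⟩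

section Slice

variable {ι : Type*} [Fintype ι]

/-- The slice of the closed `ℓ¹` ball of radius `r` about `0` by the hyperplane `∑ i, x i = s`. -/
def l1BallSlice (s r : ℝ) : Set (ι → ℝ) :=
  {x | ∑ i, x i = s ∧ ∑ i, |x i| ≤ r}

theorem convex_l1BallSlice (s r : ℝ) : Convex ℝ (l1BallSlice s r : Set (ι → ℝ)) := by
  rintro x ⟨hxs, hxr⟩ y ⟨hys, hyr⟩ a b ha hb hab
  constructor
  · calc ∑ i, (a * x i + b * y i) = a * s + b * s := by
          rw [Finset.sum_add_distrib, ← Finset.mul_sum, ← Finset.mul_sum, hxs, hys]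
      _ = s := by rw [← add_mul, hab, one_mul]
  · calc ∑ i, |a * x i + b * y i| ≤ ∑ i, (a * |x i| + b * |y i|) :=
          Finset.sum_le_sum fun i _ => (abs_add_le _ _).trans_eq <| by
            rw [abs_mul, abs_mul, abs_of_nonneg ha, abs_of_nonneg hb]
      _ = a * ∑ i, |x i| + b * ∑ i, |y i| := by
          rw [Finset.sum_add_distrib, Finset.mul_sum, Finset.mul_sum]
      _ ≤ a * r + b * r := by gcongr
      _ = r := by rw [← add_mul, hab, one_mul]

theorem sum_mul_le_of_mem_l1BallSlice {P N : ℝ} {x : ι → ℝ} (hx : x ∈ l1BallSlice (P - N) (P + N))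
    {w : ι → ℝ} {i j : ι} (hw : ∀ k, w j ≤ w k ∧ w k ≤ w i) :
    ∑ k, w k * x k ≤ w i * P - w j * N := by
  have term_le (k : ι) : 2 * (w k * x k) ≤ (w i + w j) * x k + (w i - w j) * |x k| := by
    obtain ⟨hj, hi⟩ := hw k
    rcases le_total 0 (x k) with hk | hk
    · rw [abs_of_nonneg hk]
      linarith [mul_le_mul_of_nonneg_right hi hk]
    · rw [abs_of_nonpos hk]
      linarith [mul_le_mul_of_nonpos_right hj hk]
  have two_mul_sum_le : 2 * ∑ k, w k * x k ≤ 2 * (w i * P - w j * N) :=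
    calc 2 * ∑ k, w k * x k ≤ ∑ k, ((w i + w j) * x k + (w i - w j) * |x k|) := by
          rw [Finset.mul_sum]; exact Finset.sum_le_sum fun k _ => term_le k
      _ = (w i + w j) * ∑ k, x k + (w i - w j) * ∑ k, |x k| := by
          rw [Finset.sum_add_distrib, Finset.mul_sum, Finset.mul_sum]
      _ ≤ (w i + w j) * (P - N) + (w i - w j) * (P + N) := by
          rw [hx.1]
          gcongr
          · exact sub_nonneg.mpr (hw i).1
          · exact hx.2
      _ = 2 * (w i * P - w j * N) := by ring
  exact le_of_mul_le_mul_left two_mul_sum_le two_pos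

variable [DecidableEq ι]

theorem dipoles_subset_l1BallSlice {P N : ℝ} (hP : 0 ≤ P) (hN : 0 ≤ N) :
    (dipoles P N : Set (ι → ℝ)) ⊆ l1BallSlice (P - N) (P + N) := by
  have single_nonneg (i k : ι) {c : ℝ} (hc : 0 ≤ c) : 0 ≤ (Pi.single i c : ι → ℝ) k :=
    (Pi.single_nonneg.mpr hc : 0 ≤ (Pi.single i c : ι → ℝ)) k
  rintro _ ⟨i, j, -, rfl⟩
  constructor
  · simp only [Pi.sub_apply, Finset.sum_sub_distrib, Fintype.sum_pi_single']
  · calc ∑ k, |(Pi.single i P - Pi.single j N : ι → ℝ) k|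
        ≤ ∑ k, ((Pi.single i P : ι → ℝ) k + (Pi.single j N : ι → ℝ) k) :=
          Finset.sum_le_sum fun k _ => (abs_sub _ _).trans_eq <| by
            rw [abs_of_nonneg (single_nonneg i k hP), abs_of_nonneg (single_nonneg j k hN)]
      _ = P + N := by simp only [Finset.sum_add_distrib, Fintype.sum_pi_single']

theorem l1BallSlice_eq_convexHull_dipoles [Nontrivial ι] {P N : ℝ} (hP : 0 ≤ P) (hN : 0 ≤ N) :
    (l1BallSlice (P - N) (P + N) : Set (ι → ℝ)) = convexHull ℝ (dipoles P N) := by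
  refine Set.Subset.antisymm (fun x hx => ?_)
    (convexHull_min (dipoles_subset_l1BallSlice hP hN) (convex_l1BallSlice _ _))
  by_contra hx_hull
  obtain ⟨f, u, hf_hull, hfx⟩ := geometric_hahn_banach_closed_point (convex_convexHull ℝ _)
    ((dipoles_finite P N).isClosed_convexHull ℝ) hx_hull
  let w : ι → ℝ := fun k => f (Pi.single k 1)
  have f_single (k : ι) (c : ℝ) : f (Pi.single k c) = w k * c := by
    rw [mul_comm, ← smul_eq_mul, ← map_smul, ← Pi.single_smul, smul_eq_mul, mul_one]
  have f_eq_sum : f x = ∑ k, w k * x k := by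
    simp only [← f_single, ← map_sum, Finset.univ_sum_single]
  obtain ⟨i, j, hij, hw⟩ := exists_ne_forall_le_and_le w
  have f_dipole_lt : w i * P - w j * N < u := by
    rw [← f_single, ← f_single, ← map_sub]
    exact hf_hull _ (subset_convexHull ℝ _ ⟨i, j, hij, rfl⟩)
  exact lt_irrefl u <| hfx.trans_le <| f_eq_sum ▸
    (sum_mul_le_of_mem_l1BallSlice hx hw).trans f_dipole_lt.le

end Slice

theorem stmt11 {n : ℕ} (hn : 2 ≤ n) (z : Fin n → ℝ) :
    {x : Fin n → ℝ | (∑ i, x i = ∑ i, z i) ∧ ∑ i, |x i| ≤ ∑ i, |z i|} =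
      {x : Fin n → ℝ |
        Maj x (fun i => if (i : ℕ) = 0 then ∑ j, max (z j) 0
          else if (i : ℕ) = 1 then -∑ j, max (-z j) 0 else 0)} := by
  have : Nontrivial (Fin n) := Fin.nontrivial_iff_two_le.mpr hn
  have hP : 0 ≤ ∑ j, max (z j) 0 := Finset.sum_nonneg fun _ _ => le_max_right _ _
  have hN : 0 ≤ ∑ j, max (-z j) 0 := Finset.sum_nonneg fun _ _ => le_max_right _ _
  have sum_eq : ∑ i, z i = ∑ j, max (z j) 0 - ∑ j, max (-z j) 0 := by
    rw [← Finset.sum_sub_distrib]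
    exact Finset.sum_congr rfl fun i _ => (posPart_sub_negPart (z i)).symm
  have sum_abs_eq : ∑ i, |z i| = ∑ j, max (z j) 0 + ∑ j, max (-z j) 0 := by
    rw [← Finset.sum_add_distrib]
    exact Finset.sum_congr rfl fun i _ => (posPart_add_negPart (z i)).symm
  rw [sum_eq, sum_abs_eq]
  generalize ∑ j, max (z j) 0 = P at *
  generalize ∑ j, max (-z j) 0 = N at *
  have single_sub_single :
      (fun i : Fin n => if (i : ℕ) = 0 then P else if (i : ℕ) = 1 then -N else 0) =
        Pi.single ⟨0, by omega⟩ P - Pi.single ⟨1, by omega⟩ N := by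
    funext i
    simp only [Pi.sub_apply, Pi.single_apply, Fin.ext_iff]
    split_ifs <;> grind
  rw [single_sub_single, setOf_maj_eq_convexHull, range_single_sub_single_comp_perm P N (by simp)]
  exact l1BallSlice_eq_convexHull_dipoles hP hN
end

section
/- Let d ∈ ℝ^n have all entries strictly positive and let P ⊆ ℝ^n be compact. Then M_d(P) := ∪_{y∈P} {x ∈ ℝ^n : x ≺_d y} is compact. -/
section ColStochastic

open Matrix

variable {R ι : Type*} [Fintype ι] [DecidableEq ι] [Semiring R] [PartialOrder R] [IsOrderedRing R]

theorem mem_colStochastic_iff_col_mem_stdSimplex {A : Matrix ι ι R} :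
    A ∈ colStochastic R ι ↔ ∀ j, A.col j ∈ stdSimplex R ι := by
  rw [mem_colStochastic_iff_sum, forall_comm, ← forall_and]
  rfl

theorem coe_colStochastic_eq_image_pi_stdSimplex :
    (colStochastic R ι : Set (Matrix ι ι R)) =
      (fun f ↦ (of f)ᵀ) '' Set.univ.pi fun _ : ι ↦ stdSimplex R ι := by
  ext A
  constructor
  · intro hA
    exact ⟨A.col, fun j _ ↦ mem_colStochastic_iff_col_mem_stdSimplex.mp hA j, rfl⟩
  · rintro ⟨f, hf, rfl⟩
    exact mem_colStochastic_iff_col_mem_stdSimplex.mpr fun j ↦ hf j (Set.mem_univ j)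

variable [TopologicalSpace R] [OrderClosedTopology R] [CompactIccSpace R] [ContinuousAdd R]

theorem isCompact_colStochastic : IsCompact (colStochastic R ι : Set (Matrix ι ι R)) := by
  have hcont : Continuous fun f : ι → ι → R ↦ (of f)ᵀ :=
    Continuous.matrix_transpose continuous_id
  rw [coe_colStochastic_eq_image_pi_stdSimplex]
  exact (isCompact_univ_pi fun _ ↦ isCompact_stdSimplex R ι).image hcont

variable [ContinuousMul R]

theorem isCompact_setOf_mem_colStochastic_and_mulVec_eq (d e : ι → R) :
    IsCompact {A | A ∈ colStochastic R ι ∧ A *ᵥ d = e} :=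
  isCompact_colStochastic.inter_right <|
    isClosed_eq (continuous_id.matrix_mulVec continuous_const) continuous_const

theorem stmt14_general (d : ι → R) {P : Set (ι → R)} (hP : IsCompact P) :
    IsCompact {x | ∃ y ∈ P, ∃ A ∈ colStochastic R ι, A *ᵥ d = d ∧ x = A *ᵥ y} := by
  have hcont : Continuous fun q : Matrix ι ι R × (ι → R) ↦ q.1 *ᵥ q.2 :=
    continuous_fst.matrix_mulVec continuous_snd
  have hcompact := ((isCompact_setOf_mem_colStochastic_and_mulVec_eq d d).prod hP).image hcont
  convert hcompact using 1
  ext x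
  constructor
  · rintro ⟨y, hy, A, hA, hAd, rfl⟩
    exact ⟨(A, y), ⟨⟨hA, hAd⟩, hy⟩, rfl⟩
  · rintro ⟨⟨A, y⟩, ⟨⟨hA, hAd⟩, hy⟩, rfl⟩
    exact ⟨y, hy, A, hA, hAd, rfl⟩

theorem isDStochastic_iff_mem_colStochastic_and_mulVec_eq {n : ℕ} {d : Fin n → ℝ}
    {A : Matrix (Fin n) (Fin n) ℝ} :
    IsDStochastic d A ↔ A ∈ colStochastic ℝ (Fin n) ∧ A *ᵥ d = d := by
  rw [IsDStochastic, mem_colStochastic_iff_sum, and_assoc]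

end ColStochastic

theorem stmt14 {n : ℕ} (d : Fin n → ℝ) (hd : ∀ i, 0 < d i)
    (P : Set (Fin n → ℝ)) (hP : IsCompact P) :
    IsCompact {x : Fin n → ℝ | ∃ y ∈ P, DMaj d x y} := by
  simpa only [DMaj, isDStochastic_iff_mem_colStochastic_and_mulVec_eq, and_assoc] using
    stmt14_general d hP
end

section
/- Let d ∈ ℝ^n have all entries strictly positive and let P, P' ⊆ ℝ^n be nonempty compact sets. Then the Hausdorff distance (with respect to the ℓ¹ metric on ℝ^n) between M_d(P) and M_d(P') is at most the Hausdorff distance between P and P', where M_d(Q) := ∪_{y∈Q} {x ∈ ℝ^n : x ≺_d y}. -/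
/-! Writing `M_d(P)` as the union of the images `A(P)` over the `d`-stochastic matrices `A`, it
suffices to compare the images of the two sets under one fixed `A`. The `ℓ¹` operator norm of a
matrix is its largest absolute column sum, so column-stochastic matrices are `1`-Lipschitz for `ℓ¹`,
and `1`-Lipschitz maps do not increase Hausdorff distances. -/

section Lipschitz

open Metric
open scoped NNReal

variable {α β : Type*} [PseudoEMetricSpace α] [PseudoEMetricSpace β] {f : α → β} {K : ℝ≥0}

theorem infEDist_image_le_of_lipschitzWith (hf : LipschitzWith K f) (hK : K ≠ 0) (x : α)
    (s : Set α) : infEDist (f x) (f '' s) ≤ K * infEDist x s := by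
  simp only [infEDist, ENNReal.mul_iInf_of_ne (ENNReal.coe_ne_zero.2 hK) ENNReal.coe_ne_top]
  exact le_iInf₂ fun y hy =>
    (iInf₂_le (f y) (Set.mem_image_of_mem f hy)).trans (hf.edist_le_mul x y)

theorem hausdorffEDist_image_le_of_lipschitzWith (hf : LipschitzWith K f) (hK : K ≠ 0)
    (s t : Set α) : hausdorffEDist (f '' s) (f '' t) ≤ K * hausdorffEDist s t := by
  refine hausdorffEDist_le_of_infEDist ?_ ?_
  · rintro _ ⟨x, hx, rfl⟩
    grw [infEDist_image_le_of_lipschitzWith hf hK, infEDist_le_hausdorffEDist_of_mem hx]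
  · rintro _ ⟨x, hx, rfl⟩
    grw [infEDist_image_le_of_lipschitzWith hf hK, infEDist_le_hausdorffEDist_of_mem hx,
      hausdorffEDist_comm]

end Lipschitz

section ColumnSums

open Matrix
open scoped NNReal

variable {m n R : Type*} [Fintype m] [Fintype n] [DecidableEq n] [SeminormedCommRing R]
  {A : Matrix m n R} {K : ℝ≥0}

theorem nnnorm_toLpLin_one_le_of_sum_col_le (hA : ∀ j, ∑ i, ‖A i j‖₊ ≤ K)
    (x : PiLp 1 fun _ : n => R) : ‖toLpLin 1 1 A x‖₊ ≤ K * ‖x‖₊ := by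
  simp only [PiLp.nnnorm_eq_of_L1]
  calc ∑ i, ‖toLpLin 1 1 A x i‖₊
      ≤ ∑ i, ∑ j, ‖A i j‖₊ * ‖x j‖₊ := Finset.sum_le_sum fun i _ =>
        nnnorm_sum_le_of_le _ fun j _ => nnnorm_mul_le (A i j) (x j)
    _ = ∑ j, (∑ i, ‖A i j‖₊) * ‖x j‖₊ := by
        rw [Finset.sum_comm]
        simp only [Finset.sum_mul]
    _ ≤ ∑ j, K * ‖x j‖₊ := by gcongr with j; exact hA j
    _ = K * ∑ j, ‖x j‖₊ := by rw [Finset.mul_sum]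

theorem lipschitzWith_toLpLin_one_of_sum_col_le (hA : ∀ j, ∑ i, ‖A i j‖₊ ≤ K) :
    LipschitzWith K (toLpLin 1 1 A) :=
  AddMonoidHomClass.lipschitz_of_bound_nnnorm _ K (nnnorm_toLpLin_one_le_of_sum_col_le hA)

end ColumnSums

section DMajorization

variable {n : ℕ}

theorem IsDStochastic.lipschitzWith_toLpLin_one {d : Fin n → ℝ}
    {A : Matrix (Fin n) (Fin n) ℝ} (hA : IsDStochastic d A) :
    LipschitzWith 1 (Matrix.toLpLin 1 1 A) := by
  refine lipschitzWith_toLpLin_one_of_sum_col_le fun j => ?_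
  rw [← NNReal.coe_le_coe]
  push_cast
  simp only [Real.norm_of_nonneg (hA.1 _ j), hA.2.1 j, le_refl]

/-- The set `M_d(P)` of all vectors that are `d`-majorized by some element of `P`, as a subset of
`ℝⁿ` with its `ℓ¹` metric. -/
def dMajorizedSet (d : Fin n → ℝ) (P : Set (PiLp 1 fun _ : Fin n => ℝ)) :
    Set (PiLp 1 fun _ : Fin n => ℝ) :=
  {x | ∃ y ∈ P, DMaj d (fun i => x i) (fun i => y i)}

theorem dMajorizedSet_eq_iUnion_image (d : Fin n → ℝ) (P : Set (PiLp 1 fun _ : Fin n => ℝ)) :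
    dMajorizedSet d P = ⋃ A : {A // IsDStochastic d A}, Matrix.toLpLin 1 1 A.1 '' P := by
  ext x
  simp only [Set.mem_iUnion, Set.mem_image]
  constructor
  · rintro ⟨y, hy, A, hA, hxy⟩
    exact ⟨⟨A, hA⟩, y, hy, PiLp.ext fun i => (congrFun hxy i).symm⟩
  · rintro ⟨⟨A, hA⟩, y, hy, rfl⟩
    exact ⟨y, hy, A, hA, rfl⟩

end DMajorization

theorem stmt15_general {n : ℕ} (d : Fin n → ℝ) (P P' : Set (PiLp 1 fun _ : Fin n => ℝ)) :
    Metric.hausdorffEDist (dMajorizedSet d P) (dMajorizedSet d P') ≤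
      Metric.hausdorffEDist P P' := by
  simp only [dMajorizedSet_eq_iUnion_image]
  refine Metric.hausdorffEDist_iUnion_le.trans (iSup_le fun A => ?_)
  simpa only [ENNReal.coe_one, one_mul] using
    hausdorffEDist_image_le_of_lipschitzWith A.2.lipschitzWith_toLpLin_one one_ne_zero P P'

theorem stmt15 {n : ℕ} (d : Fin n → ℝ) (hd : ∀ i, 0 < d i)
    (P P' : Set (PiLp 1 (fun _ : Fin n => ℝ)))
    (hPne : P.Nonempty) (hP'ne : P'.Nonempty)
    (hPc : IsCompact P) (hP'c : IsCompact P') :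
    Metric.hausdorffDist
        {x : PiLp 1 (fun _ : Fin n => ℝ) | ∃ y ∈ P, DMaj d (fun i => x i) (fun i => y i)}
        {x : PiLp 1 (fun _ : Fin n => ℝ) | ∃ y ∈ P', DMaj d (fun i => x i) (fun i => y i)} ≤
      Metric.hausdorffDist P P' :=
  ENNReal.toReal_mono
    (Metric.hausdorffEDist_ne_top_of_nonempty_of_bounded hPne hP'ne hPc.isBounded hP'c.isBounded)
    (stmt15_general d P P')
end

section
/- Let y ∈ ℝ^n. Then the set {x ∈ ℝ^n : x ≺ y} equals the convex hull of the set { (y_{σ(1)}, …, y_{σ(n)}) : σ a permutation of {1,…,n} }, and every entrywise permutation of y is an extreme point of this set. -/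
/-! By Birkhoff's theorem the doubly stochastic matrices are the convex hull of the permutation
matrices; applying the linear map `A ↦ A *ᵥ y` turns this into the first claim. For the second, the
strictly convex function `x ↦ ∑ i, x i ^ 2` is constant on the rearrangements of `y`, so on their
convex hull it attains its maximum at each of them, and a strictly convex function attains its
maximum only at extreme points. -/

section StrictConvex

variable {𝕜 E β : Type*}

theorem mem_extremePoints_of_strictConvexOn_of_isMaxOn [Semiring 𝕜] [PartialOrder 𝕜]
    [AddCommMonoid E] [Module 𝕜 E] [AddCommMonoid β] [LinearOrder β] [IsOrderedAddMonoid β]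
    [Module 𝕜 β] [PosSMulStrictMono 𝕜 β] {s : Set E} {f : E → β} {x : E}
    (hf : StrictConvexOn 𝕜 s f) (hx : x ∈ s) (hmax : IsMaxOn f s x) : x ∈ s.extremePoints 𝕜 := by
  refine mem_extremePoints_iff_left.2 ⟨hx, fun a ha b hb hxab => ?_⟩
  obtain rfl | hab := eq_or_ne a b
  · obtain ⟨c, d, -, -, hcd, hx_eq⟩ := hxab
    rwa [Convex.combo_self hcd] at hx_eq
  · exact absurd (hf.lt_on_openSegment ha hb hab hxab) (max_le (hmax ha) (hmax hb)).not_gt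

theorem subset_extremePoints_convexHull_of_strictConvexOn [Field 𝕜] [LinearOrder 𝕜]
    [IsStrictOrderedRing 𝕜] [AddCommGroup E] [Module 𝕜 E] [AddCommGroup β] [LinearOrder β]
    [IsOrderedAddMonoid β] [Module 𝕜 β] [IsStrictOrderedModule 𝕜 β] {s t : Set E} {f : E → β}
    (hf : StrictConvexOn 𝕜 t f) (hst : s ⊆ t) (hconst : ∀ x ∈ s, ∀ y ∈ s, f x = f y) :
    s ⊆ (convexHull 𝕜 s).extremePoints 𝕜 := by
  intro x hx
  have hmax : IsMaxOn f (convexHull 𝕜 s) x := fun z hz => by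
    obtain ⟨w, hw, hzw⟩ := hf.convexOn.exists_ge_of_mem_convexHull hst hz
    exact hzw.trans_eq (hconst w hw x hx)
  exact mem_extremePoints_of_strictConvexOn_of_isMaxOn
    (hf.subset (convexHull_min hst hf.1) (convex_convexHull 𝕜 s)) (subset_convexHull 𝕜 s hx) hmax

theorem strictConvexOn_sum_apply {ι : Type*} [Fintype ι] {F : ι → Type*} [Semiring 𝕜]
    [PartialOrder 𝕜] [∀ i, AddCommMonoid (F i)] [∀ i, Module 𝕜 (F i)] [AddCommMonoid β]
    [PartialOrder β] [IsOrderedCancelAddMonoid β] [Module 𝕜 β] {s : ∀ i, Set (F i)}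
    {f : ∀ i, F i → β} (hf : ∀ i, StrictConvexOn 𝕜 (s i) (f i)) :
    StrictConvexOn 𝕜 (Set.univ.pi s) fun x => ∑ i, f i (x i) := by
  refine ⟨convex_pi fun i _ => (hf i).1, fun x hx y hy hxy a b ha hb hab => ?_⟩
  obtain ⟨j, hj⟩ := Function.ne_iff.1 hxy
  simp only [Finset.smul_sum, ← Finset.sum_add_distrib]
  refine Finset.sum_lt_sum (fun i _ => ?_) ⟨j, Finset.mem_univ j, ?_⟩
  · obtain hi | hi := eq_or_ne (x i) (y i)
    · simp [hi, Convex.combo_self hab]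
    · exact ((hf i).2 (hx i trivial) (hy i trivial) hi ha hb hab).le
  · exact (hf j).2 (hx j trivial) (hy j trivial) hj ha hb hab

theorem strictConvexOn_sq [CommRing 𝕜] [LinearOrder 𝕜] [IsStrictOrderedRing 𝕜] :
    StrictConvexOn 𝕜 Set.univ fun x : 𝕜 => x ^ 2 := by
  refine ⟨convex_univ, fun x _ y _ hxy a b ha hb hab => ?_⟩
  have hgap : a * x ^ 2 + b * y ^ 2 - (a * x + b * y) ^ 2 = a * b * (x - y) ^ 2 := by
    linear_combination (a * x ^ 2 + b * y ^ 2) * hab.symm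
  exact sub_pos.1 (hgap ▸ mul_pos (mul_pos ha hb) (sq_pos_of_ne_zero (sub_ne_zero.2 hxy)))

end StrictConvex

section Permutohedron

open Matrix

variable {R n : Type*} [Field R] [LinearOrder R] [IsStrictOrderedRing R]

theorem image_mulVec_doublyStochastic [Fintype n] [DecidableEq n] (y : n → R) :
    (· *ᵥ y) '' (doublyStochastic R n : Set (Matrix n n R)) =
      convexHull R (Set.range fun σ : Equiv.Perm n => y ∘ σ) := by
  rw [doublyStochastic_eq_convexHull_permMatrix]
  refine (((mulVecBilin R R).flip y).image_convexHull _).trans (congrArg _ ?_)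
  ext w
  simp [permMatrix_mulVec]

theorem range_comp_perm_subset_extremePoints_convexHull [Finite n] (y : n → R) :
    (Set.range fun σ : Equiv.Perm n => y ∘ σ) ⊆
      (convexHull R (Set.range fun σ : Equiv.Perm n => y ∘ σ)).extremePoints R := by
  cases nonempty_fintype n
  have hsum : ∀ x ∈ Set.range fun σ : Equiv.Perm n => y ∘ σ, ∑ i, x i ^ 2 = ∑ i, y i ^ 2 := by
    rintro _ ⟨σ, rfl⟩
    exact Equiv.sum_comp σ fun i => y i ^ 2
  exact subset_extremePoints_convexHull_of_strictConvexOn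
    (strictConvexOn_sum_apply fun _ => strictConvexOn_sq) (fun _ _ _ _ => trivial)
    fun x hx z hz => (hsum x hx).trans (hsum z hz).symm

theorem setOf_maj_eq_image_mulVec {n : ℕ} (y : Fin n → ℝ) :
    {x | Maj x y} = (· *ᵥ y) '' (doublyStochastic ℝ (Fin n) : Set (Matrix _ _ ℝ)) := by
  ext x
  constructor
  · rintro ⟨A, hnonneg, hcol, hrow, rfl⟩
    exact ⟨A, mem_doublyStochastic_iff_sum.2 ⟨hnonneg, hrow, hcol⟩, rfl⟩
  · rintro ⟨A, hA, rfl⟩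
    obtain ⟨hnonneg, hrow, hcol⟩ := mem_doublyStochastic_iff_sum.1 hA
    exact ⟨A, hnonneg, hcol, hrow, rfl⟩

theorem stmt17_general [Fintype n] [DecidableEq n] (y : n → R) :
    (· *ᵥ y) '' (doublyStochastic R n : Set (Matrix n n R)) =
      convexHull R (Set.range fun σ : Equiv.Perm n => y ∘ σ) ∧
    ∀ σ : Equiv.Perm n,
      y ∘ σ ∈ ((· *ᵥ y) '' (doublyStochastic R n : Set (Matrix n n R))).extremePoints R := by
  refine ⟨image_mulVec_doublyStochastic y, fun σ => ?_⟩
  rw [image_mulVec_doublyStochastic]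
  exact range_comp_perm_subset_extremePoints_convexHull y ⟨σ, rfl⟩

end Permutohedron

theorem stmt17 {n : ℕ} (y : Fin n → ℝ) :
    {x : Fin n → ℝ | Maj x y} =
      convexHull ℝ {w : Fin n → ℝ | ∃ σ : Equiv.Perm (Fin n), w = fun i => y (σ i)} ∧
    ∀ σ : Equiv.Perm (Fin n),
      (fun i => y (σ i)) ∈ Set.extremePoints ℝ {x : Fin n → ℝ | Maj x y} := by
  simpa only [setOf_maj_eq_image_mulVec, Set.range, Function.comp_def, eq_comm] using
    stmt17_general y
end

section
/- Let y ∈ ℝ^n have nonnegative entries and let d ∈ ℝ^n have all entries strictly positive. Then there exists z ∈ ℝ^n with z ≺_d y such that every x ∈ ℝ^n with x ≺_d y satisfies x ≺ z (classical majorization); moreover z is unique up to permutation of its entries, i.e. if z' also has these two properties then z' is an entrywise permutation of z. -/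
/-!
Rescaling the columns of a `d`-stochastic matrix by `d` turns it into a coupling of `d` with itself,
and then `x ≺_d y` says that `x = P *ᵥ (y / d)` for such a coupling `P`. The coupling producing the
maximal `z` is the north-west corner coupling: it matches the rows, sorted by decreasing `d`, with
the columns, sorted by decreasing `y / d`. Its first rows have the largest total weight and
receive the largest ratios, so by the bathtub principle they bound every sum of equally many
entries of every `x ≺_d y`. By the Hardy–Littlewood–Pólya criterion this is `x ≺ z`.

For uniqueness, `z ≺ z'` places `z` in the convex hull of the rearrangements of `z'`. If also
`z' ≺ z`, then `z` maximizes the strictly convex function `∑ i, z i ^ 2` on that hull, so it is an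
extreme point, that is, one of the rearrangements.
-/

section Development

open Finset Matrix Equiv

section ConvexHull

variable {ι : Type*} [Fintype ι]

lemma mem_convexHull_of_forall_exists_sum_mul_le {s : Set (ι → ℝ)} (hs : s.Finite) {x : ι → ℝ}
    (h : ∀ c : ι → ℝ, ∃ v ∈ s, ∑ i, c i * x i ≤ ∑ i, c i * v i) : x ∈ convexHull ℝ s := by
  classical
  by_contra hx
  obtain ⟨f, u, hfs, hfx⟩ := geometric_hahn_banach_closed_point (convex_convexHull ℝ s)
    (hs.isClosed_convexHull ℝ) hx
  have hf (v : ι → ℝ) : f v = ∑ i, f (fun j => if i = j then 1 else 0) * v i :=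
    (LinearMap.pi_apply_eq_sum_univ f.toLinearMap v).trans
      (sum_congr rfl fun i _ => mul_comm _ _)
  obtain ⟨v, hv, hle⟩ := h fun i => f fun j => if i = j then 1 else 0
  rw [← hf, ← hf] at hle
  exact (hfs v (subset_convexHull ℝ s hv)).not_ge (hfx.le.trans hle)

lemma mem_of_mem_convexHull_of_strictConvexOn {E : Type*} [AddCommGroup E] [Module ℝ E]
    {f : E → ℝ} (hf : StrictConvexOn ℝ Set.univ f) {s : Set E} {x : E} (hx : x ∈ convexHull ℝ s)
    (hmax : ∀ v ∈ s, f v ≤ f x) : x ∈ s := by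
  have hmax_hull : ∀ v ∈ convexHull ℝ s, f v ≤ f x := fun v hv =>
    have ⟨w, hw, hvw⟩ := hf.convexOn.exists_ge_of_mem_convexHull (Set.subset_univ s) hv
    hvw.trans (hmax w hw)
  refine extremePoints_convexHull_subset (𝕜 := ℝ) ⟨hx, fun v hv w hw hxvw => ?_⟩
  rcases eq_or_ne v w with rfl | hvw
  · rw [openSegment_same] at hxvw
    exact Eq.symm hxvw
  · have hlt := hf.lt_on_openSegment trivial trivial hvw hxvw
    exact absurd (max_le (hmax_hull v hv) (hmax_hull w hw)) hlt.not_ge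

lemma strictConvexOn_sum_sq : StrictConvexOn ℝ Set.univ fun v : ι → ℝ => ∑ i, v i ^ 2 := by
  refine ⟨convex_univ, fun v _ w _ hvw a b ha hb hab => ?_⟩
  have hsq : StrictConvexOn ℝ Set.univ fun t : ℝ => t ^ 2 := even_two.strictConvexOn_pow two_ne_zero
  obtain ⟨i, hi⟩ := Function.ne_iff.1 hvw
  simp only [smul_sum, ← sum_add_distrib]
  exact sum_lt_sum (fun j _ => hsq.convexOn.2 trivial trivial ha.le hb.le hab)
    ⟨i, mem_univ i, hsq.2 trivial trivial hi ha hb hab⟩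

end ConvexHull

section Majorization

variable {n : ℕ} {x z : Fin n → ℝ}

lemma exists_perm_antitone {α : Type*} [LinearOrder α] (f : Fin n → α) :
    ∃ σ : Perm (Fin n), Antitone (f ∘ σ) :=
  ⟨Tuple.sort (OrderDual.toDual ∘ f), Tuple.monotone_sort (OrderDual.toDual ∘ f)⟩

lemma maj_iff_mem_convexHull :
    Maj x z ↔ x ∈ convexHull ℝ (Set.range fun π : Perm (Fin n) => z ∘ π) := by
  have himage : convexHull ℝ (Set.range fun π : Perm (Fin n) => z ∘ π) =
      (mulVecBilin ℝ ℝ).flip z '' doublyStochastic ℝ (Fin n) := by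
    rw [doublyStochastic_eq_convexHull_permMatrix, LinearMap.image_convexHull]
    congr 1
    ext v
    simp [permMatrix_mulVec]
  simp only [himage, Set.mem_image, SetLike.mem_coe, mem_doublyStochastic_iff_sum, Maj]
  exact exists_congr fun A =>
    ⟨fun ⟨hA, hcol, hrow, hx⟩ => ⟨⟨hA, hrow, hcol⟩, hx.symm⟩,
      fun ⟨⟨hA, hrow, hcol⟩, hx⟩ => ⟨hA, hcol, hrow, hx.symm⟩⟩

lemma Maj.sum_sq_le (h : Maj x z) : ∑ i, x i ^ 2 ≤ ∑ i, z i ^ 2 := by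
  obtain ⟨_, ⟨π, rfl⟩, hle⟩ :=
    strictConvexOn_sum_sq.convexOn.exists_ge_of_mem_convexHull (Set.subset_univ _)
      (maj_iff_mem_convexHull.1 h)
  exact hle.trans_eq (Equiv.sum_comp π fun i => z i ^ 2)

lemma Maj.exists_perm_of_maj (hxz : Maj x z) (hzx : Maj z x) :
    ∃ π : Perm (Fin n), x = z ∘ π := by
  have hx : x ∈ Set.range fun π : Perm (Fin n) => z ∘ π := by
    refine mem_of_mem_convexHull_of_strictConvexOn strictConvexOn_sum_sq
      (maj_iff_mem_convexHull.1 hxz) ?_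
    rintro _ ⟨π, rfl⟩
    exact (Equiv.sum_comp π fun i => z i ^ 2).trans_le hzx.sum_sq_le
  exact hx.imp fun _ h => h.symm

lemma sum_mul_le_mul_sum_of_antitone {ι : Type*} [LinearOrder ι] {c w : ι → ℝ}
    (hc : Antitone c) {s : Finset ι} (hw : ∀ k ∈ s, ∑ i ∈ s with i ≤ k, w i ≤ 0) {b : ℝ}
    (hb : ∀ i ∈ s, b ≤ c i) : ∑ i ∈ s, c i * w i ≤ b * ∑ i ∈ s, w i := by
  induction s using Finset.induction_on_max generalizing b with
  | empty => simp
  | insert a s ha ih =>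
    have has : a ∉ s := fun h => (ha a h).false
    have hws : ∀ k ∈ s, ∑ i ∈ s with i ≤ k, w i ≤ 0 := fun k hk => by
      simpa only [filter_insert, if_neg (ha k hk).not_ge] using hw k (mem_insert_of_mem hk)
    have htotal : ∑ i ∈ insert a s, w i ≤ 0 := by
      have hle : ∀ i ∈ insert a s, i ≤ a := by
        simpa using fun i hi => (ha i hi).le
      simpa only [filter_true_of_mem hle] using hw a (mem_insert_self a s)
    calc ∑ i ∈ insert a s, c i * w i
        = c a * w a + ∑ i ∈ s, c i * w i := sum_insert has
      _ ≤ c a * w a + c a * ∑ i ∈ s, w i := by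
          gcongr
          exact ih hws fun i hi => hc (ha i hi).le
      _ = c a * ∑ i ∈ insert a s, w i := by rw [sum_insert has, mul_add]
      _ ≤ b * ∑ i ∈ insert a s, w i :=
          mul_le_mul_of_nonpos_right (hb a (mem_insert_self a s)) htotal

lemma sum_mul_le_sum_mul_of_antitone {ι : Type*} [Fintype ι] [LinearOrder ι] {c v w : ι → ℝ}
    (hc : Antitone c) (hle : ∀ k, ∑ i with i ≤ k, v i ≤ ∑ i with i ≤ k, w i)
    (heq : ∑ i, v i = ∑ i, w i) : ∑ i, c i * v i ≤ ∑ i, c i * w i := by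
  obtain ⟨b, hb⟩ := Set.finite_range c |>.bddBelow
  have h := sum_mul_le_mul_sum_of_antitone (w := v - w) hc (s := univ)
    (fun k _ => by simpa using hle k) fun i _ => hb ⟨i, rfl⟩
  simpa [mul_sub, heq] using h

lemma maj_of_forall_sum_le (σ : Perm (Fin n))
    (hle : ∀ (ρ : Perm (Fin n)) (k : Fin n), ∑ i with i ≤ k, x (ρ i) ≤ ∑ i with i ≤ k, z (σ i))
    (heq : ∑ i, x i = ∑ i, z i) : Maj x z := by
  refine maj_iff_mem_convexHull.2 <|
    mem_convexHull_of_forall_exists_sum_mul_le (Set.finite_range _) fun c => ?_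
  obtain ⟨ρ, hρ⟩ := exists_perm_antitone c
  refine ⟨_, ⟨ρ.symm.trans σ, rfl⟩, ?_⟩
  calc ∑ i, c i * x i
      = ∑ i, c (ρ i) * x (ρ i) := (Equiv.sum_comp ρ fun i => c i * x i).symm
    _ ≤ ∑ i, c (ρ i) * z (σ i) :=
        sum_mul_le_sum_mul_of_antitone hρ (hle ρ) (by rw [Equiv.sum_comp, Equiv.sum_comp, heq])
    _ = ∑ i, c i * z (σ (ρ.symm i)) := by
        rw [← Equiv.sum_comp ρ fun i => c i * z (σ (ρ.symm i))]
        simp only [symm_apply_apply]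

lemma sum_comp_perm_le_sum_of_antitone {ι : Type*} [Fintype ι] [LinearOrder ι] {f : ι → ℝ}
    (hf : Antitone f) (ρ : Perm ι) (k : ι) : ∑ i with i ≤ k, f (ρ i) ≤ ∑ i with i ≤ k, f i := by
  have hind : Antitone fun i => if i ≤ k then (1 : ℝ) else 0 := fun i j hij => by
    by_cases hj : j ≤ k
    · simp only [hj, hij.trans hj, le_refl]
    · simp only [hj, if_false]
      positivity
  simpa only [ite_mul, one_mul, zero_mul, ← sum_filter] using
    (hind.monovary hf).sum_mul_comp_perm_le_sum_mul (σ := ρ)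

end Majorization

section Bathtub

lemma exists_nonneg_separating {κ : Type*} [Finite κ] {r : κ → ℝ} (hr : ∀ j, 0 ≤ r j)
    {U V : Set κ} (h : ∀ u ∈ U, ∀ v ∈ V, r u ≤ r v) :
    ∃ l, 0 ≤ l ∧ (∀ u ∈ U, r u ≤ l) ∧ ∀ v ∈ V, l ≤ r v := by
  have hbdd : BddAbove (insert 0 (r '' U)) := (U.toFinite.image r).insert 0 |>.bddAbove
  refine ⟨sSup (insert 0 (r '' U)), le_csSup hbdd (Set.mem_insert _ _), fun u hu =>
    le_csSup hbdd (Set.mem_insert_of_mem _ ⟨u, hu, rfl⟩), fun v hv =>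
    csSup_le (Set.insert_nonempty _ _) ?_⟩
  rintro _ (rfl | ⟨u, hu, rfl⟩)
  exacts [hr v, h u hu v hv]

lemma bathtub_sum_mul_le {κ : Type*} [Fintype κ] {b r p q : κ → ℝ} {l : ℝ} (hl : 0 ≤ l)
    (hp : ∀ j, 0 ≤ p j) (hpb : ∀ j, p j ≤ b j) (hq : ∀ j, l < r j → q j = b j)
    (hq' : ∀ j, r j < l → q j = 0) (hpq : ∑ j, p j ≤ ∑ j, q j) :
    ∑ j, p j * r j ≤ ∑ j, q j * r j := by
  have hterm (j : κ) : 0 ≤ (q j - p j) * (r j - l) := by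
    rcases lt_trichotomy (r j) l with hj | hj | hj
    · exact mul_nonneg_of_nonpos_of_nonpos (by simpa [hq' j hj] using hp j) (sub_nonpos.2 hj.le)
    · simp [hj]
    · exact mul_nonneg (by simpa [hq j hj] using hpb j) (sub_nonneg.2 hj.le)
  have hsum : 0 ≤ ∑ j, (q j * r j - p j * r j) - l * (∑ j, q j - ∑ j, p j) := by
    rw [← sum_sub_distrib, mul_sum, ← sum_sub_distrib]
    exact sum_nonneg fun j _ => (hterm j).trans_eq (by ring)
  rw [sum_sub_distrib] at hsum
  linarith [mul_nonneg hl (sub_nonneg.2 hpq)]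

end Bathtub

section Coupling

lemma sum_mulVec_eq_sum_mul {ι κ : Type*} [Fintype κ] (P : Matrix ι κ ℝ) (r : κ → ℝ)
    (S : Finset ι) :
    ∑ i ∈ S, (P *ᵥ r) i = ∑ j, (∑ i ∈ S, P i j) * r j := by
  simp only [mulVec, dotProduct, sum_mul]
  exact sum_comm

variable {ι ι' κ : Type*} [Fintype ι] [Fintype ι'] [Fintype κ]

/-- `P` is a coupling, or transport plan, of the marginals `a` and `b`: its entries are
nonnegative, its row sums are `a` and its column sums are `b`. The total mass is arbitrary.
Couplings of `d` with itself are the `d`-stochastic matrices with column `j` scaled by `d j`. -/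
structure IsCoupling (a : ι → ℝ) (b : κ → ℝ) (P : Matrix ι κ ℝ) : Prop where
  nonneg : ∀ i j, 0 ≤ P i j
  row_sum : ∀ i, ∑ j, P i j = a i
  col_sum : ∀ j, ∑ i, P i j = b j

namespace IsCoupling

variable {a : ι → ℝ} {a' : ι' → ℝ} {b r : κ → ℝ} {P : Matrix ι κ ℝ} {Q : Matrix ι' κ ℝ}

lemma sum_mulVec (hP : IsCoupling a b P) (r : κ → ℝ) :
    ∑ i, (P *ᵥ r) i = ∑ j, b j * r j := by
  simp only [sum_mulVec_eq_sum_mul, hP.col_sum]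

lemma sum_rows_le (hP : IsCoupling a b P) (S : Finset ι) (j : κ) : ∑ i ∈ S, P i j ≤ b j :=
  hP.col_sum j ▸ sum_le_univ_sum_of_nonneg fun i => hP.nonneg i j

lemma sum_rows_eq (hP : IsCoupling a b P) {S : Finset ι} {j : κ} (hS : ∀ i ∉ S, P i j = 0) :
    ∑ i ∈ S, P i j = b j :=
  hP.col_sum j ▸ sum_subset (subset_univ S) fun i _ hi => hS i hi

lemma sum_sum_rows (hP : IsCoupling a b P) (S : Finset ι) :
    ∑ j, ∑ i ∈ S, P i j = ∑ i ∈ S, a i := by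
  rw [sum_comm]
  exact sum_congr rfl fun i _ => hP.row_sum i

lemma submatrix {κ' : Type*} [Fintype κ'] (σ : ι' ≃ ι) (τ : κ' ≃ κ) (hP : IsCoupling a b P) :
    IsCoupling (a ∘ σ) (b ∘ τ) (P.submatrix σ τ) where
  nonneg i j := hP.nonneg (σ i) (τ j)
  row_sum i := (Equiv.sum_comp τ (P (σ i))).trans (hP.row_sum (σ i))
  col_sum j := (Equiv.sum_comp σ fun i => P i (τ j)).trans (hP.col_sum (τ j))

lemma sum_mulVec_le (hP : IsCoupling a b P) (hQ : IsCoupling a' b Q) (hr : ∀ j, 0 ≤ r j)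
    {S : Finset ι} {T : Finset ι'} (hST : ∑ i ∈ S, a i ≤ ∑ i ∈ T, a' i)
    (hQT : ∀ i ∈ T, ∀ i' ∉ T, ∀ j j', Q i j ≠ 0 → Q i' j' ≠ 0 → r j' ≤ r j) :
    ∑ i ∈ S, (P *ᵥ r) i ≤ ∑ i ∈ T, (Q *ᵥ r) i := by
  obtain ⟨l, hl, hout, hin⟩ := exists_nonneg_separating hr
    (U := {j | ∃ i ∉ T, Q i j ≠ 0}) (V := {j | ∃ i ∈ T, Q i j ≠ 0})
    fun j' ⟨i', hi', hQi'⟩ j ⟨i, hi, hQi⟩ => hQT i hi i' hi' j j' hQi hQi'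
  rw [sum_mulVec_eq_sum_mul, sum_mulVec_eq_sum_mul]
  refine bathtub_sum_mul_le hl (fun j => sum_nonneg fun i _ => hP.nonneg i j) (hP.sum_rows_le S)
    (fun j hj => hQ.sum_rows_eq fun i hi => ?_) (fun j hj => sum_eq_zero fun i hi => ?_) ?_
  · exact of_not_not fun h => (hout j ⟨i, hi, h⟩).not_gt hj
  · exact of_not_not fun h => (hin j ⟨i, hi, h⟩).not_gt hj
  · rwa [hP.sum_sum_rows, hQ.sum_sum_rows]

end IsCoupling

end Coupling

section NorthWest

variable {ι κ : Type*} [Fintype ι] [LinearOrder ι] [Fintype κ] [LinearOrder κ]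

/-- The mass of `a` strictly below `i`. For nonnegative `a`, the consecutive intervals
`[massBelow a i, massBelow a i + a i]` cut `[0, ∑ i, a i]` into pieces of lengths `a i`. -/
def massBelow (a : ι → ℝ) (i : ι) : ℝ := ∑ j with j < i, a j

/-- The north-west corner coupling of nonnegative `a` and `b` of equal total mass. Instead of
running the greedy algorithm, the `(i, j)` entry is given in closed form, as the length of the
overlap of the `i`-th interval cut out by `a` with the `j`-th interval cut out by `b`. -/
def northWest (a : ι → ℝ) (b : κ → ℝ) : Matrix ι κ ℝ := fun i j =>
  max 0 (min (massBelow a i + a i) (massBelow b j + b j) - max (massBelow a i) (massBelow b j))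

variable {a : ι → ℝ} {b : κ → ℝ}

lemma massBelow_nonneg (ha : ∀ i, 0 ≤ a i) (i : ι) : 0 ≤ massBelow a i :=
  sum_nonneg fun j _ => ha j

lemma massBelow_add_self (a : ι → ℝ) (i : ι) : massBelow a i + a i = ∑ j with j ≤ i, a j := by
  have hfilter : ({j | j ≤ i} : Finset ι) = insert i ({j | j < i} : Finset ι) := by
    ext j
    simp [le_iff_eq_or_lt]
  rw [hfilter, sum_insert (by simp), add_comm, massBelow]

lemma massBelow_add_self_le_massBelow (ha : ∀ i, 0 ≤ a i) {i i' : ι} (h : i < i') :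
    massBelow a i + a i ≤ massBelow a i' := by
  rw [massBelow_add_self]
  exact sum_le_sum_of_subset_of_nonneg (monotone_filter_right _ fun j _ hj => hj.trans_lt h)
    fun j _ _ => ha j

lemma massBelow_add_self_le_sum (ha : ∀ i, 0 ≤ a i) (i : ι) :
    massBelow a i + a i ≤ ∑ j, a j := by
  rw [massBelow_add_self]
  exact sum_le_univ_sum_of_nonneg ha

lemma sum_apply_partialSum_sub {ι : Type*} [LinearOrder ι] (g : ℝ → ℝ) (a : ι → ℝ)
    (s : Finset ι) :
    ∑ i ∈ s, (g ((∑ j ∈ s with j < i, a j) + a i) - g (∑ j ∈ s with j < i, a j)) =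
      g (∑ i ∈ s, a i) - g 0 := by
  induction s using Finset.induction_on_max with
  | empty => simp
  | insert m s hm ih =>
    have hms : m ∉ s := fun h => (hm m h).false
    have hbelow {i : ι} (hi : i ∈ s) : ({j ∈ insert m s | j < i} : Finset ι) = {j ∈ s | j < i} := by
      rw [filter_insert, if_neg (hm i hi).not_gt]
    have hbelow_max : ({j ∈ insert m s | j < m} : Finset ι) = s := by
      rw [filter_insert, if_neg (lt_irrefl m), filter_true_of_mem hm]
    have hsum : ∑ i ∈ s, (g ((∑ j ∈ insert m s with j < i, a j) + a i) -
        g (∑ j ∈ insert m s with j < i, a j)) = g (∑ i ∈ s, a i) - g 0 :=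
      (sum_congr rfl fun i hi => by rw [hbelow hi]).trans ih
    rw [sum_insert hms, hsum, hbelow_max, sum_insert hms, add_comm (a m), sub_add_sub_cancel]

lemma max_zero_min_sub_max_eq_clamp_sub {p q s t : ℝ} (hpq : p ≤ q) (hst : s ≤ t) :
    max 0 (min q t - max p s) = max p (min q t) - max p (min q s) := by
  grind

lemma northWest_transpose (a : ι → ℝ) (b : κ → ℝ) : (northWest a b)ᵀ = northWest b a := by
  ext j i
  simp only [transpose_apply, northWest, min_comm, max_comm (massBelow a i)]

lemma sum_northWest (ha : ∀ i, 0 ≤ a i) (hb : ∀ j, 0 ≤ b j) (hab : ∑ i, a i = ∑ j, b j) (i : ι) :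
    ∑ j, northWest a b i j = a i := by
  let clamp (t : ℝ) : ℝ := max (massBelow a i) (min (massBelow a i + a i) t)
  have hi : massBelow a i ≤ massBelow a i + a i := le_add_of_nonneg_right (ha i)
  have h0 : clamp 0 = massBelow a i :=
    max_eq_left ((min_le_right _ _).trans (massBelow_nonneg ha i))
  have htotal : clamp (∑ j, b j) = massBelow a i + a i := by
    simp only [clamp, min_eq_left (hab ▸ massBelow_add_self_le_sum ha i), max_eq_right hi]
  calc ∑ j, northWest a b i j
      = ∑ j, (clamp (massBelow b j + b j) - clamp (massBelow b j)) :=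
        sum_congr rfl fun j _ =>
          max_zero_min_sub_max_eq_clamp_sub hi (le_add_of_nonneg_right (hb j))
    _ = clamp (∑ j, b j) - clamp 0 := sum_apply_partialSum_sub clamp b univ
    _ = a i := by rw [htotal, h0, add_sub_cancel_left]

lemma isCoupling_northWest (ha : ∀ i, 0 ≤ a i) (hb : ∀ j, 0 ≤ b j)
    (hab : ∑ i, a i = ∑ j, b j) : IsCoupling a b (northWest a b) where
  nonneg _ _ := le_max_left _ _
  row_sum := sum_northWest ha hb hab
  col_sum j := by
    simpa only [← northWest_transpose a b, transpose_apply] using sum_northWest hb ha hab.symm j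

lemma massBelow_lt_of_northWest_ne_zero {i : ι} {j : κ} (h : northWest a b i j ≠ 0) :
    massBelow a i < massBelow b j + b j ∧ massBelow b j < massBelow a i + a i := by
  have hlt : max (massBelow a i) (massBelow b j) <
      min (massBelow a i + a i) (massBelow b j + b j) :=
    lt_of_not_ge fun hle => h (max_eq_left (sub_nonpos.2 hle))
  obtain ⟨hmin, hmin'⟩ := lt_min_iff.1 hlt
  exact ⟨(le_max_left _ _).trans_lt hmin', (le_max_right _ _).trans_lt hmin⟩

lemma le_of_northWest_ne_zero (ha : ∀ i, 0 ≤ a i) (hb : ∀ j, 0 ≤ b j) {i i' : ι} {j j' : κ}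
    (h : northWest a b i j ≠ 0) (h' : northWest a b i' j' ≠ 0) (hi : i < i') : j ≤ j' := by
  by_contra! hj
  have hlt := (massBelow_lt_of_northWest_ne_zero h).2
  have hlt' := (massBelow_lt_of_northWest_ne_zero h').1
  linarith [massBelow_add_self_le_massBelow ha hi, massBelow_add_self_le_massBelow hb hj]

end NorthWest

section DMajorization

variable {n : ℕ}

lemma exists_isCoupling_antitone_support {m : ℕ} {a : Fin m → ℝ} {b : Fin n → ℝ}
    (ha : ∀ i, 0 ≤ a i) (hb : ∀ j, 0 ≤ b j) (hab : ∑ i, a i = ∑ j, b j) (σ : Perm (Fin m))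
    (r : Fin n → ℝ) :
    ∃ Q, IsCoupling a b Q ∧ ∀ i i' j j', i < i' → Q (σ i) j ≠ 0 → Q (σ i') j' ≠ 0 →
      r j' ≤ r j := by
  obtain ⟨τ, hτ⟩ := exists_perm_antitone r
  have hC : IsCoupling (a ∘ σ) (b ∘ τ) (northWest (a ∘ σ) (b ∘ τ)) :=
    isCoupling_northWest (fun i => ha (σ i)) (fun j => hb (τ j))
      ((Equiv.sum_comp σ a).trans (hab.trans (Equiv.sum_comp τ b).symm))
  refine ⟨_, by simpa [Function.comp_assoc] using hC.submatrix σ.symm τ.symm,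
    fun i i' j j' hi h h' => ?_⟩
  rw [submatrix_apply, symm_apply_apply] at h h'
  simpa using hτ (le_of_northWest_ne_zero (fun i => ha (σ i)) (fun j => hb (τ j)) h h' hi)

lemma isDStochastic_iff_isCoupling {d : Fin n → ℝ} (hd : ∀ i, 0 < d i)
    {A : Matrix (Fin n) (Fin n) ℝ} :
    IsDStochastic d A ↔ IsCoupling d d (A * diagonal d) := by
  have hnonneg (i j) : 0 ≤ A i j * d j ↔ 0 ≤ A i j := mul_nonneg_iff_of_pos_right (hd j)
  have hcol (j) : ∑ i, A i j * d j = d j ↔ ∑ i, A i j = 1 := by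
    rw [← sum_mul, mul_eq_right₀ (hd j).ne']
  have hrow : A *ᵥ d = d ↔ ∀ i, ∑ j, A i j * d j = d i := funext_iff
  constructor
  · rintro ⟨hA, hsum, hfix⟩
    constructor <;> simpa only [mul_diagonal, hnonneg, hcol, ← hrow]
  · rintro ⟨hA, hfix, hsum⟩
    simp only [mul_diagonal, hnonneg, hcol, ← hrow] at hA hfix hsum
    exact ⟨hA, hsum, hfix⟩

lemma dMaj_iff_exists_isCoupling {d x y : Fin n → ℝ} (hd : ∀ i, 0 < d i) :
    DMaj d x y ↔ ∃ P, IsCoupling d d P ∧ x = P *ᵥ (y / d) := by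
  have hy : diagonal d *ᵥ (y / d) = y := by
    ext j
    rw [mulVec_diagonal, Pi.div_apply, mul_div_cancel₀ _ (hd j).ne']
  constructor
  · rintro ⟨A, hA, rfl⟩
    exact ⟨_, (isDStochastic_iff_isCoupling hd).1 hA, by rw [← mulVec_mulVec, hy]⟩
  · rintro ⟨P, hP, rfl⟩
    have hPd : P * diagonal d⁻¹ * diagonal d = P := by
      ext i j
      simp [(hd j).ne']
    refine ⟨P * diagonal d⁻¹, (isDStochastic_iff_isCoupling hd).2 (hPd.symm ▸ hP), ?_⟩
    conv_lhs => rw [← hPd, ← mulVec_mulVec, hy]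

theorem exists_dMaj_forall_maj {y d : Fin n → ℝ} (hy : ∀ i, 0 ≤ y i) (hd : ∀ i, 0 < d i) :
    ∃ z, DMaj d z y ∧ ∀ x, DMaj d x y → Maj x z := by
  have hd0 (i : Fin n) : 0 ≤ d i := (hd i).le
  obtain ⟨σ, hσ⟩ := exists_perm_antitone d
  obtain ⟨Q, hQ, hQr⟩ := exists_isCoupling_antitone_support hd0 hd0 rfl σ (y / d)
  refine ⟨Q *ᵥ (y / d), (dMaj_iff_exists_isCoupling hd).2 ⟨Q, hQ, rfl⟩, fun x hx => ?_⟩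
  obtain ⟨P, hP, rfl⟩ := (dMaj_iff_exists_isCoupling hd).1 hx
  refine maj_of_forall_sum_le σ (fun ρ k => ?_) ((hP.sum_mulVec _).trans (hQ.sum_mulVec _).symm)
  have hweight : ∑ i with i ≤ k, d (ρ i) ≤ ∑ i with i ≤ k, d (σ i) := by
    simpa using sum_comp_perm_le_sum_of_antitone hσ (ρ.trans σ.symm) k
  exact (hP.submatrix ρ (.refl _)).sum_mulVec_le (hQ.submatrix σ (.refl _))
    (fun j => div_nonneg (hy j) (hd0 j)) hweight fun i hi i' hi' j j' =>
      hQr i i' j j' (by simp only [mem_filter_univ] at hi hi'; omega)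

end DMajorization

end Development

theorem stmt18 {n : ℕ} (y d : Fin n → ℝ) (hy : ∀ i, 0 ≤ y i) (hd : ∀ i, 0 < d i) :
    ∃ z : Fin n → ℝ, DMaj d z y ∧ (∀ x, DMaj d x y → Maj x z) ∧
      ∀ z' : Fin n → ℝ, DMaj d z' y → (∀ x, DMaj d x y → Maj x z') →
        ∃ σ : Equiv.Perm (Fin n), z' = fun i => z (σ i) := by
  obtain ⟨z, hz, hmax⟩ := exists_dMaj_forall_maj hy hd
  exact ⟨z, hz, hmax, fun z' hz' hmax' => (hmax z' hz').exists_perm_of_maj (hmax' z hz)⟩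
end
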